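/- arXiv:1206.6747 — 7 statements merged into one kernel-verified Lean document; each statement's English description precedes it below -/
import Mathlib

section
/- Let f ∈ 𝓔 be a simple exponential polynomial and let g ∈ 𝓔 be a nonzero exponential polynomial such that f and g have infinitely many common zeros in ℂ. Then there exists a non-unit h ∈ 𝓔, having infinitely many zeros in ℂ, which divides both f and g in the ring 𝓔. -/
open Complex Set

noncomputable section

/-- `f` is an exponential polynomial, i.e. an element of the ring `𝓔`. -/
def IsExpPoly (f : ℂ → ℂ) : Prop :=
  ∃ (N : ℕ) (lam mu : Fin N → ℂ),
    ∀ z : ℂ, f z = ∑ i, lam i * Complex.exp (mu i * z)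

/-- `h` divides `f` in the ring `𝓔`. -/
def EDvd (h f : ℂ → ℂ) : Prop :=
  ∃ q : ℂ → ℂ, IsExpPoly q ∧ f = h * q

/-- `f` is a unit of the ring `𝓔`. -/
def EUnit (f : ℂ → ℂ) : Prop :=
  IsExpPoly f ∧ ∃ g : ℂ → ℂ, IsExpPoly g ∧ f * g = 1

/-- `f` is irreducible in the ring `𝓔`. -/
def EIrreducible (f : ℂ → ℂ) : Prop :=
  IsExpPoly f ∧ f ≠ 0 ∧ ¬ EUnit f ∧
    ∀ g h : ℂ → ℂ, IsExpPoly g → IsExpPoly h → f = g * h → EUnit g ∨ EUnit h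

/-- canonical representation: pairwise distinct exponents, nonzero coefficients. -/
def IsCanonicalRep (f : ℂ → ℂ) {N : ℕ} (lam mu : Fin N → ℂ) : Prop :=
  (∀ i, lam i ≠ 0) ∧ Function.Injective mu ∧
    ∀ z : ℂ, f z = ∑ i, lam i * Complex.exp (mu i * z)

/-- `f` is a simple exponential polynomial: its support has `ℚ`-dimension 1. -/
def IsSimple (f : ℂ → ℂ) : Prop :=
  ∃ (N : ℕ) (lam mu : Fin N → ℂ), IsCanonicalRep f lam mu ∧
    Module.finrank ℚ (Submodule.span ℚ (Set.range mu)) = 1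

/-- Transcendence degree over `ℚ` of (the field generated by) a set of complex numbers. -/
noncomputable def trdegQ (s : Set ℂ) : Cardinal.{0} :=
  ⨆ t : {t : Finset ℂ // ↑t ⊆ s ∧ AlgebraicIndependent ℚ (Subtype.val : {x : ℂ // x ∈ t} → ℂ)},
    (t.1.card : Cardinal)

/-- Schanuel's Conjecture. -/
def SchanuelConjecture : Prop :=
  ∀ (n : ℕ) (lam : Fin n → ℂ), LinearIndependent ℚ lam →
    (n : Cardinal) ≤ trdegQ (Set.range lam ∪ Set.range fun i => Complex.exp (lam i))

/-!
A simple `f` is a Laurent polynomial in `e^{βz}`, so it has the period `τ = 2πi/β` and its zeros lie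
in finitely many cosets of `ℤτ`. One of these cosets, on which `f` vanishes identically, contains
infinitely many zeros of `g`. Along that coset `g` is an exponential sum `n ↦ ∑ cⱼ wⱼⁿ`, and the
Skolem–Mahler–Lech theorem yields a progression `a + kσ` of common zeros. An exponential polynomial
vanishing on `a + kσ` is divisible by `e^{2πi(z - a)/σ} - 1`: exponents `μ` sharing the same value
of `e^{μσ}` differ by multiples of `2πi/σ`, and the coefficients within such a class (after moving
the origin to `a`) add up to zero.

For Skolem–Mahler–Lech we follow Hansel and avoid `p`-adic analysis. In a suitable finitely
generated ring some odd prime `p` is not a unit and every `wⱼ` has finite order modulo `p`, so along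
a progression the sum becomes `∑ cⱼ (1 + p yⱼ)ⁿ`. Expanding in binomial coefficients and clearing
denominators prime to `p` gives a polynomial in `n` whose coefficients of index at least `2e` are
divisible by `p ^ e`. Having `2e` roots, it vanishes modulo `p ^ e` for every `e`, hence everywhere
by Krull's intersection theorem.
-/

/-! ### Hansel's argument -/

open Polynomial in
lemma map_quotient_mk_eq_zero_of_roots {A : Type*} [CommRing A] [IsDomain A] (I : Ideal A)
    (Q : A[X]) (S : Finset A) (hroots : ∀ a ∈ S, Q.IsRoot a)
    (hcoeff : ∀ i, S.card ≤ i → Q.coeff i ∈ I) : Q.map (Ideal.Quotient.mk I) = 0 := by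
  rcases eq_or_ne Q 0 with rfl | hQ
  · exact Polynomial.map_zero _
  have hdvd : (S.val.map fun a => X - C a).prod ∣ Q := by
    rw [Multiset.prod_X_sub_C_dvd_iff_le_roots hQ, Finset.val_le_iff_val_subset]
    exact fun a ha => (mem_roots hQ).2 (hroots a ha)
  have hmonic : (S.val.map fun a => X - C a).prod.Monic :=
    monic_multiset_prod_of_monic _ _ fun a _ => monic_X_sub_C a
  by_contra hne
  have : Nontrivial (A ⧸ I) := Polynomial.nontrivial_iff.1 ⟨_, _, hne⟩
  refine (hmonic.map (Ideal.Quotient.mk I)).not_dvd_of_degree_lt hne ?_ (Polynomial.map_dvd _ hdvd)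
  rw [hmonic.degree_map, degree_eq_natDegree hmonic.ne_zero,
    natDegree_multiset_prod_X_sub_C_eq_card, degree_lt_iff_coeff_zero]
  intro i hi
  rw [coeff_map, Ideal.Quotient.eq_zero_iff_mem]
  exact hcoeff i hi

lemma factorial_dvd_pow_mul_ordCompl_factorial {p : ℕ} (hp : p.Prime) (hp2 : p ≠ 2) {e k m : ℕ}
    (hek : 2 * e ≤ k) (hkm : k ≤ m) : k.factorial ∣ p ^ (k - e) * ordCompl[p] m.factorial := by
  have hval : k.factorial.factorization p ≤ k - e := by
    have hle := Nat.factorization_factorial_le_div_pred hp k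
    have hhalf : k / (p - 1) ≤ k / 2 := Nat.div_le_div_left (by have := hp.two_le; omega) two_pos
    omega
  rw [← Nat.ordProj_mul_ordCompl_eq_self k.factorial p]
  exact mul_dvd_mul (pow_dvd_pow p hval)
    (Nat.ordCompl_dvd_ordCompl_of_dvd (Nat.factorial_dvd_factorial hkm) p)

lemma pow_dvd_pow_mul_ordCompl_factorial_div {p : ℕ} (hp : p.Prime) (hp2 : p ≠ 2) {e k m : ℕ}
    (hek : 2 * e ≤ k) (hkm : k ≤ m) :
    p ^ e ∣ p ^ k * ordCompl[p] m.factorial / k.factorial := by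
  have hsplit : p ^ k = p ^ e * p ^ (k - e) := by rw [← pow_add]; congr 1; omega
  rw [hsplit, mul_assoc,
    Nat.mul_div_assoc _ (factorial_dvd_pow_mul_ordCompl_factorial hp hp2 hek hkm)]
  exact dvd_mul_right _ _

lemma isOfFinOrder_of_isIntegral {k R : Type*} [CommRing k] [Finite k] [CommRing R] [Algebra k R]
    {x : R} (hx : IsIntegral k x) (hunit : IsUnit x) : IsOfFinOrder x := by
  obtain ⟨u, rfl⟩ := hunit
  have : Module.Finite k (Algebra.adjoin k {(u : R)}) :=
    Module.Finite.iff_fg.2 hx.fg_adjoin_singleton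
  have : Finite (Algebra.adjoin k {(u : R)}) := Module.finite_of_finite k
  have hpow : ∀ n : ℕ, (u : R) ^ n ∈ Algebra.adjoin k {(u : R)} := fun n =>
    pow_mem (Algebra.self_mem_adjoin_singleton k (u : R)) n
  rw [Units.isOfFinOrder_val]
  by_contra hinf
  refine not_injective_infinite_finite
    (fun n => (⟨u ^ n, hpow n⟩ : Algebra.adjoin k {(u : R)})) fun m n hmn => ?_
  exact injective_pow_iff_not_isOfFinOrder.2 hinf (Units.ext (by simpa using hmn))

lemma isOfFinOrder_of_isIntegral_int {R : Type*} [CommRing R] (p : ℕ) [NeZero p] [CharP R p]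
    {x : R} (hx : IsIntegral ℤ x) (hunit : IsUnit x) : IsOfFinOrder x := by
  let := ZMod.algebra R p
  exact isOfFinOrder_of_isIntegral (k := ZMod p) hx.tower_top hunit

lemma exists_infinite_setOf_add_mul {P : ℕ → Prop} (hinf : {n | P n}.Infinite) {d : ℕ}
    (hd : d ≠ 0) : ∃ a, {k | P (a + d * k)}.Infinite := by
  by_contra! hfin
  refine hinf (((Set.finite_lt_nat d).biUnion fun a _ =>
    (hfin a).image (a + d * ·)).subset fun n hn => ?_)
  refine Set.mem_biUnion (Nat.mod_lt n (Nat.pos_of_ne_zero hd)) ⟨n / d, ?_, Nat.mod_add_div n d⟩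
  rwa [Set.mem_ofPred_eq, Nat.mod_add_div]

lemma exists_pow_eq_one_of_isOfFinOrder {ι M : Type*} [Finite ι] [Monoid M] {x : ι → M}
    (hx : ∀ j, IsOfFinOrder (x j)) : ∃ N ≠ 0, ∀ j, x j ^ N = 1 :=
  have := Fintype.ofFinite ι
  ⟨∏ j, orderOf (x j), Finset.prod_ne_zero_iff.2 fun j _ => (hx j).orderOf_pos.ne',
    fun j => orderOf_dvd_iff_pow_eq_one.1 (Finset.dvd_prod_of_mem _ (Finset.mem_univ j))⟩

section Hansel

variable {A : Type*} [CommRing A]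

/-- A polynomial taking the value `u * ∑ k, n.choose k * (p ^ k * d k)` at each `n ≤ m`, where `u`
is the prime-to-`p` part of `m!`. For `p` an odd prime the natural-number divisions are exact. -/
def newtonPolynomial (p m : ℕ) (d : ℕ → A) : Polynomial A :=
  ∑ k ∈ Finset.range (m + 1),
    Polynomial.C (((p ^ k * ordCompl[p] m.factorial / k.factorial : ℕ) : A) * d k) *
      descPochhammer A k

lemma newtonPolynomial_eval_natCast {p : ℕ} (hp : p.Prime) (hp2 : p ≠ 2) (d : ℕ → A) {n m : ℕ}
    (hnm : n ≤ m) :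
    (newtonPolynomial p m d).eval (n : A) =
      (ordCompl[p] m.factorial : ℕ) * ∑ k ∈ Finset.range (n + 1), n.choose k * (p ^ k * d k) := by
  set u := ordCompl[p] m.factorial with hu
  have hterm : ∀ k ∈ Finset.range (m + 1),
      ((p ^ k * u / k.factorial : ℕ) : A) * d k * n.descFactorial k =
        u * (n.choose k * (p ^ k * d k)) := by
    intro k hk
    have hdvd : k.factorial ∣ p ^ k * u :=
      factorial_dvd_pow_mul_ordCompl_factorial hp hp2 (e := 0) k.zero_le
        (Finset.mem_range_succ_iff.1 hk)
    have hcast := congrArg (Nat.cast : ℕ → A) (Nat.div_mul_cancel hdvd)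
    rw [Nat.descFactorial_eq_factorial_mul_choose]
    push_cast at hcast ⊢
    linear_combination (n.choose k * d k : A) * hcast
  simp only [newtonPolynomial, Polynomial.eval_finsetSum, Polynomial.eval_mul, Polynomial.eval_C,
    descPochhammer_eval_eq_descFactorial, ← hu]
  rw [Finset.sum_congr rfl hterm, ← Finset.mul_sum]
  refine congrArg _ (Finset.sum_subset (Finset.range_mono (by omega)) fun k _ hk => ?_).symm
  rw [Finset.mem_range, not_lt] at hk
  rw [Nat.choose_eq_zero_of_lt hk, Nat.cast_zero, zero_mul]

lemma newtonPolynomial_coeff_mem_span_pow [IsDomain A] {p : ℕ} (hp : p.Prime) (hp2 : p ≠ 2)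
    (m : ℕ) (d : ℕ → A) {e i : ℕ} (hi : 2 * e ≤ i) :
    (newtonPolynomial p m d).coeff i ∈ Ideal.span {(p : A) ^ e} := by
  simp only [newtonPolynomial, Polynomial.finsetSum_coeff, Polynomial.coeff_C_mul]
  refine Ideal.sum_mem _ fun k hk => ?_
  rcases lt_or_ge k i with hki | hik
  · rw [Polynomial.coeff_eq_zero_of_natDegree_lt (by rwa [descPochhammer_natDegree]), mul_zero]
    exact Ideal.zero_mem _
  · have hdvd := pow_dvd_pow_mul_ordCompl_factorial_div hp hp2 (hi.trans hik)
      (Finset.mem_range_succ_iff.1 hk)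
    refine Ideal.mul_mem_right _ _ (Ideal.mul_mem_right _ _ (Ideal.mem_span_singleton.2 ?_))
    exact_mod_cast Nat.cast_dvd_cast (α := A) hdvd

lemma mem_span_pow_of_natCast_mul_mem {p u : ℕ} (h : p.Coprime u) {e : ℕ} {x : A}
    (hx : (u : A) * x ∈ Ideal.span {(p : A) ^ e}) : x ∈ Ideal.span {(p : A) ^ e} := by
  rw [Ideal.mem_span_singleton] at hx ⊢
  exact (h.cast (R := A)).pow_left.dvd_of_dvd_mul_left hx

theorem sum_choose_mul_mem_span_pow_of_infinite [IsDomain A] [CharZero A] {p : ℕ} (hp : p.Prime)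
    (hp2 : p ≠ 2) (d : ℕ → A)
    (hinf : {n : ℕ | ∑ k ∈ Finset.range (n + 1), n.choose k * (p ^ k * d k) = 0}.Infinite)
    (t e : ℕ) :
    ∑ k ∈ Finset.range (t + 1), t.choose k * (p ^ k * d k) ∈ Ideal.span {(p : A) ^ e} := by
  obtain ⟨S, hS, hcard⟩ := hinf.exists_subset_card_eq (2 * e)
  set m := S.sup id + t
  have hzero : (newtonPolynomial p m d).map (Ideal.Quotient.mk (Ideal.span {(p : A) ^ e})) = 0 := by
    refine map_quotient_mk_eq_zero_of_roots _ _ (S.map Nat.castEmbedding) ?_ fun i hi => ?_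
    · intro a ha
      obtain ⟨n, hn, rfl⟩ := Finset.mem_map.1 ha
      have hnm : n ≤ m := (Finset.le_sup (f := id) hn).trans (Nat.le_add_right _ _)
      rw [Nat.castEmbedding_apply, Polynomial.IsRoot.def,
        newtonPolynomial_eval_natCast hp hp2 d hnm, hS hn, mul_zero]
    · rw [Finset.card_map, hcard] at hi
      exact newtonPolynomial_coeff_mem_span_pow hp hp2 m d hi
  refine mem_span_pow_of_natCast_mul_mem (Nat.coprime_ordCompl hp m.factorial_ne_zero) ?_
  rw [← newtonPolynomial_eval_natCast hp hp2 d (Nat.le_add_left t _),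
    ← Ideal.Quotient.eq_zero_iff_mem, ← Polynomial.eval₂_at_apply, ← Polynomial.eval_map, hzero,
    Polynomial.eval_zero]

theorem sum_mul_one_add_pow_eq_zero_of_infinite [IsDomain A] [CharZero A] [IsNoetherianRing A]
    {p : ℕ} (hp : p.Prime) (hp2 : p ≠ 2) (hunit : ¬ IsUnit (p : A)) {ι : Type*} [Fintype ι]
    (c y : ι → A) (hinf : {n : ℕ | ∑ j, c j * (1 + p * y j) ^ n = 0}.Infinite) (n : ℕ) :
    ∑ j, c j * (1 + p * y j) ^ n = 0 := by
  have hexpand : ∀ n : ℕ, ∑ j, c j * (1 + p * y j) ^ n =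
      ∑ k ∈ Finset.range (n + 1), n.choose k * (p ^ k * ∑ j, c j * y j ^ k) := by
    intro n
    simp only [add_comm (1 : A), add_pow, one_pow, mul_one, Finset.mul_sum]
    rw [Finset.sum_comm]
    exact Finset.sum_congr rfl fun k _ => Finset.sum_congr rfl fun j _ => by ring
  simp only [hexpand] at hinf ⊢
  have hkrull : ⨅ e : ℕ, Ideal.span {(p : A)} ^ e = ⊥ :=
    Ideal.iInf_pow_eq_bot_of_isDomain _ (by rwa [Ne, Ideal.span_singleton_eq_top])
  rw [← Ideal.mem_bot, ← hkrull, Ideal.mem_iInf]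
  intro e
  rw [Ideal.span_singleton_pow]
  exact sum_choose_mul_mem_span_pow_of_infinite hp hp2 _ hinf n e

theorem exists_progression_sum_mul_pow_eq_zero_of_isIntegral_quotient [IsDomain A] [CharZero A]
    [IsNoetherianRing A] {p : ℕ} (hp : p.Prime) (hp2 : p ≠ 2) (hunit : ¬ IsUnit (p : A))
    {ι : Type*} [Fintype ι] (c w : ι → A) (hw : ∀ j, IsUnit (w j))
    (hint : ∀ j, IsIntegral ℤ (Ideal.Quotient.mk (Ideal.span {(p : A)}) (w j)))
    (hinf : {n : ℕ | ∑ j, c j * w j ^ n = 0}.Infinite) :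
    ∃ a d : ℕ, d ≠ 0 ∧ ∀ k : ℕ, ∑ j, c j * w j ^ (a + d * k) = 0 := by
  have : Fact p.Prime := ⟨hp⟩
  have : CharP (A ⧸ Ideal.span {(p : A)}) p := CharP.quotient A p hunit
  obtain ⟨N, hN, hwN⟩ := exists_pow_eq_one_of_isOfFinOrder fun j =>
    isOfFinOrder_of_isIntegral_int p (hint j) ((hw j).map _)
  have hmod : ∀ j, ∃ y, w j ^ N = 1 + p * y := fun j => by
    have hmem := hwN j
    rw [← map_pow, ← map_one (Ideal.Quotient.mk _), Ideal.Quotient.eq,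
      Ideal.mem_span_singleton'] at hmem
    obtain ⟨y, hy⟩ := hmem
    exact ⟨y, by linear_combination -hy⟩
  choose y hy using hmod
  obtain ⟨a, ha⟩ := exists_infinite_setOf_add_mul hinf hN
  have hrewrite : ∀ k, ∑ j, c j * w j ^ (a + N * k) =
      ∑ j, (c j * w j ^ a) * (1 + p * y j) ^ k := fun k => by
    simp only [pow_add, pow_mul, hy, mul_assoc]
  simp only [hrewrite] at ha
  refine ⟨a, N, hN, fun k => ?_⟩
  rw [hrewrite]
  exact sum_mul_one_add_pow_eq_zero_of_infinite hp hp2 hunit _ y ha k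

end Hansel

/-! ### Reduction modulo a good prime -/

section GoodReduction

open MvPolynomial

variable {σ : Type*}

lemma exists_natCast_mul_isIntegralElem_int {K : Type*} [CommRing K] [Algebra ℚ K] (t : σ → K)
    {x : K} (hx : (aeval t : MvPolynomial σ ℚ →ₐ[ℚ] K).toRingHom.IsIntegralElem x) :
    ∃ m : ℕ, m ≠ 0 ∧
      (aeval t : MvPolynomial σ ℤ →ₐ[ℤ] K).toRingHom.IsIntegralElem (m * x) := by
  let := MvPolynomial.algebraMvPolynomial (σ := σ) (R := ℤ) (S := ℚ)
  let : Algebra (MvPolynomial σ ℚ) K := (aeval t : MvPolynomial σ ℚ →ₐ[ℚ] K).toRingHom.toAlgebra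
  let : Algebra (MvPolynomial σ ℤ) K := (aeval t : MvPolynomial σ ℤ →ₐ[ℤ] K).toRingHom.toAlgebra
  have : IsScalarTower (MvPolynomial σ ℤ) (MvPolynomial σ ℚ) K :=
    IsScalarTower.of_algebraMap_eq fun F => (aeval_map_algebraMap ℚ t F).symm
  obtain ⟨⟨_, m, hm, rfl⟩, hint⟩ := IsIntegral.exists_multiple_integral_of_isLocalization
    ((nonZeroDivisors ℤ).map (C (σ := σ))) x (show IsIntegral (MvPolynomial σ ℚ) x from hx)
  have hsmul : (C m : MvPolynomial σ ℤ) • x = (m : K) * x := by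
    rw [Algebra.smul_def]
    exact congrArg (· * x) ((aeval_C t m).trans (eq_intCast _ m))
  have hmx : IsIntegral (MvPolynomial σ ℤ) ((m : K) * x) := hsmul ▸ hint
  have hm0 : m ≠ 0 := nonZeroDivisors.ne_zero hm
  obtain ⟨n, hn⟩ := m.eq_nat_or_neg
  refine ⟨n, by rintro rfl; exact hm0 (by simpa using hn),
    show IsIntegral (MvPolynomial σ ℤ) ((n : K) * x) from ?_⟩
  rcases hn with rfl | rfl
  · simpa only [Int.cast_natCast] using hmx
  · simpa only [Int.cast_neg, Int.cast_natCast, neg_mul, neg_neg] using hmx.neg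

theorem exists_algebraicIndependent_isIntegralElem {k K : Type*} [Field k] [CommRing K]
    [Nontrivial K] [Algebra k K] (S : Finset K) :
    ∃ (r : ℕ) (t : Fin r → K), AlgebraicIndependent k t ∧
      ∀ x ∈ S, (aeval t : MvPolynomial (Fin r) k →ₐ[k] K).toRingHom.IsIntegralElem x := by
  set B := Algebra.adjoin k (S : Set K)
  have : Algebra.FiniteType k B := (Subalgebra.fg_iff_finiteType _).1 ⟨S, rfl⟩
  obtain ⟨r, g, hinj, hint⟩ := exists_integral_inj_algHom_of_fg k B
  have haeval : aeval (fun i => (g (X i) : K)) = B.val.comp g := by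
    ext; simp
  refine ⟨r, fun i => g (X i), ?_, fun x hx => ?_⟩
  · rw [AlgebraicIndependent, haeval]
    exact Subtype.val_injective.comp hinj
  · rw [haeval]
    have hxB : x ∈ B := Algebra.subset_adjoin hx
    exact RingHom.IsIntegralElem.map (hint ⟨x, hxB⟩) B.val.toRingHom

lemma inv_mem_of_isIntegral {K : Type*} [Field K] {V : Subring K} {x : K} (hx : x ∈ V)
    (hint : IsIntegral V x⁻¹) : x⁻¹ ∈ V := by
  rcases eq_or_ne x 0 with rfl | hx0
  · rwa [inv_zero]
  have hunit : IsUnit (algebraMap V (integralClosure V K) ⟨x, hx⟩) :=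
    .of_mul_eq_one ⟨x⁻¹, hint⟩ (Subtype.ext (mul_inv_cancel₀ hx0))
  obtain ⟨y, hy⟩ := (isUnit_of_map_unit _ _ hunit).exists_right_inv
  rw [inv_eq_of_mul_eq_one_right (congrArg Subtype.val hy)]
  exact y.2

/-- The subring of `ℚ[t]` formed by the polynomials in `t` whose constant term is a `p`-adic
integer. For algebraically independent `t` it contains `tᵢ / p` but not `1 / p`. -/
def padicConstantCoeffSubring (p : ℕ) [Fact p.Prime] {K : Type*} [CommRing K] [Algebra ℚ K]
    (t : σ → K) : Subring K :=
  ((PadicInt.subring p).comap ((algebraMap ℚ ℚ_[p]).comp constantCoeff)).map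
    (aeval t : MvPolynomial σ ℚ →ₐ[ℚ] K).toRingHom

section

variable (p : ℕ) [Fact p.Prime] {K : Type*} [Field K] [CharZero K] {t : σ → K}

lemma aeval_mem_padicConstantCoeffSubring {F : MvPolynomial σ ℚ}
    (hF : ‖((constantCoeff F : ℚ) : ℚ_[p])‖ ≤ 1) : aeval t F ∈ padicConstantCoeffSubring p t :=
  ⟨F, hF, rfl⟩

lemma aeval_int_mem_padicConstantCoeffSubring (F : MvPolynomial σ ℤ) :
    aeval t F ∈ padicConstantCoeffSubring p t := by
  rw [← aeval_map_algebraMap ℚ]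
  refine aeval_mem_padicConstantCoeffSubring p ?_
  rw [constantCoeff_map, eq_intCast, Rat.cast_intCast]
  exact Padic.norm_int_le_one _

lemma inv_natCast_mem_padicConstantCoeffSubring {m : ℕ} (hm : p.Coprime m) :
    (m : K)⁻¹ ∈ padicConstantCoeffSubring p t := by
  have hC : aeval t (C (m : ℚ)⁻¹) = (m : K)⁻¹ := by simp
  rw [← hC]
  refine aeval_mem_padicConstantCoeffSubring p ?_
  rw [constantCoeff_C, Rat.cast_inv, Rat.cast_natCast, norm_inv,
    Padic.norm_natCast_eq_one_iff.2 hm, inv_one]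

lemma div_natCast_mem_padicConstantCoeffSubring (i : σ) :
    t i / p ∈ padicConstantCoeffSubring p t := by
  have hX : aeval t (C (p : ℚ)⁻¹ * X i) = t i / p := by simp [div_eq_inv_mul]
  rw [← hX]
  exact aeval_mem_padicConstantCoeffSubring p (by simp)

lemma inv_natCast_self_notMem_padicConstantCoeffSubring (ht : AlgebraicIndependent ℚ t) :
    (p : K)⁻¹ ∉ padicConstantCoeffSubring p t := by
  rintro ⟨F, hF, hFp⟩
  obtain rfl : F = C (p : ℚ)⁻¹ := ht (hFp.trans (by simp))
  have hle : ‖((constantCoeff (C (p : ℚ)⁻¹ : MvPolynomial σ ℚ) : ℚ) : ℚ_[p])‖ ≤ 1 := hF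
  rw [constantCoeff_C, Rat.cast_inv, Rat.cast_natCast, norm_inv, Padic.norm_p, inv_inv] at hle
  exact hle.not_gt (mod_cast (Fact.out : p.Prime).one_lt)

lemma isIntegral_padicConstantCoeffSubring_of_natCast_mul {m : ℕ} (hm : p.Coprime m)
    {x : K}
    (hx : (aeval t : MvPolynomial σ ℤ →ₐ[ℤ] K).toRingHom.IsIntegralElem (m * x)) :
    IsIntegral (padicConstantCoeffSubring p t) x := by
  have hm0 : m ≠ 0 := by
    rintro rfl
    exact (Fact.out : p.Prime).ne_one ((Nat.coprime_zero_right p).1 hm)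
  have hmx : IsIntegral (padicConstantCoeffSubring p t) (m * x) := by
    obtain ⟨q, hq, hqx⟩ := hx
    refine ⟨q.map ((aeval t : MvPolynomial σ ℤ →ₐ[ℤ] K).toRingHom.codRestrict
      (padicConstantCoeffSubring p t) (aeval_int_mem_padicConstantCoeffSubring p)), hq.map _, ?_⟩
    rwa [Polynomial.eval₂_map]
  have hinv : IsIntegral (padicConstantCoeffSubring p t) (m : K)⁻¹ :=
    isIntegral_algebraMap (R := padicConstantCoeffSubring p t)
      (x := ⟨_, inv_natCast_mem_padicConstantCoeffSubring p hm⟩)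
  simpa [hm0] using hinv.mul hmx

end

lemma isIntegral_int_quotient_mk_of_isIntegralElem {A : Type*} [CommRing A] (I : Ideal A)
    {t : σ → A} (ht : ∀ i, t i ∈ I) {y : A}
    (hy : (aeval t : MvPolynomial σ ℤ →ₐ[ℤ] A).toRingHom.IsIntegralElem y) :
    IsIntegral ℤ (Ideal.Quotient.mk I y) := by
  have hcomp : (Ideal.Quotient.mk I).comp (aeval t : MvPolynomial σ ℤ →ₐ[ℤ] A).toRingHom =
      (algebraMap ℤ (A ⧸ I)).comp constantCoeff :=
    MvPolynomial.ringHom_ext (by simp) fun i => by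
      simpa using Ideal.Quotient.eq_zero_iff_mem.2 (ht i)
  have hmap := hy.map (Ideal.Quotient.mk I)
  rw [hcomp] at hmap
  exact hmap.of_comp

lemma isIntegralElem_aeval_of_coe {R K : Type*} [CommRing R] [CommRing K] [Algebra R K]
    {A : Subalgebra R K} {t : σ → A} {y : A}
    (hy : (aeval fun i => (t i : K) : MvPolynomial σ R →ₐ[R] K).toRingHom.IsIntegralElem (y : K)) :
    (aeval t : MvPolynomial σ R →ₐ[R] A).toRingHom.IsIntegralElem y := by
  have hcomp : (aeval fun i => (t i : K)) = A.val.comp (aeval t) := by ext; simp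
  rw [hcomp] at hy
  obtain ⟨q, hq, hqy⟩ := hy
  refine ⟨q, hq, Subtype.val_injective ?_⟩
  exact (Polynomial.hom_eval₂ q _ A.val.toRingHom y).trans hqy

lemma isIntegral_int_of_natCast_mul {R : Type*} [CommRing R] {p m : ℕ} (hp : (p : R) = 0)
    (hpm : p.Coprime m) {x : R} (hx : IsIntegral ℤ (m * x)) : IsIntegral ℤ x := by
  obtain ⟨a, b, hab⟩ := Nat.isCoprime_iff_coprime.2 hpm
  have hx' : x = (b : R) * (m * x) := by
    have hcast := congrArg (Int.cast : ℤ → R) hab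
    push_cast at hcast
    linear_combination -x * hcast + a * x * hp
  rw [hx']
  exact (isIntegral_algebraMap (R := ℤ) (x := b)).mul hx

lemma isIntegral_int_quotient_mk_of_div_mem {K : Type*} [Field K] [CharZero K]
    {A : Subalgebra ℤ K} {p m : ℕ} (hp : p ≠ 0) (hpm : p.Coprime m) {t : σ → K}
    (ht : ∀ i, t i / p ∈ A) {x : A}
    (hx : (aeval t : MvPolynomial σ ℤ →ₐ[ℤ] K).toRingHom.IsIntegralElem (m * x)) :
    IsIntegral ℤ (Ideal.Quotient.mk (Ideal.span {(p : A)}) x) := by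
  have hpmem : (p : A) ∈ Ideal.span {(p : A)} := Ideal.mem_span_singleton_self _
  have hpzero : (p : A ⧸ Ideal.span {(p : A)}) = 0 := by
    rw [← map_natCast (Ideal.Quotient.mk _), Ideal.Quotient.eq_zero_iff_mem]
    exact hpmem
  refine isIntegral_int_of_natCast_mul hpzero hpm ?_
  rw [← map_natCast (Ideal.Quotient.mk _), ← map_mul]
  refine isIntegral_int_quotient_mk_of_isIntegralElem _
    (t := fun i => (p : A) * ⟨t i / p, ht i⟩) (fun i => Ideal.mul_mem_right _ _ hpmem)
    (isIntegralElem_aeval_of_coe ?_)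
  simpa [mul_div_cancel₀ _ (Nat.cast_ne_zero (R := K).2 hp)] using hx

theorem exists_subalgebra_fg_isIntegral_quotient {K : Type*} [Field K] [CharZero K]
    (S : Finset K) :
    ∃ (p : ℕ) (A : Subalgebra ℤ K), p.Prime ∧ p ≠ 2 ∧ A.FG ∧ (p : K)⁻¹ ∉ A ∧ (S : Set K) ⊆ A ∧
      ∀ x : A, (x : K) ∈ S → IsIntegral ℤ (Ideal.Quotient.mk (Ideal.span {(p : A)}) x) := by
  obtain ⟨r, t, ht, hint⟩ := exists_algebraicIndependent_isIntegralElem (k := ℚ) S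
  choose! m hm0 hm using fun x hx => exists_natCast_mul_isIntegralElem_int t (hint x hx)
  obtain ⟨p, hple, hp⟩ := Nat.exists_infinite_primes (S.sup m + 3)
  have : Fact p.Prime := ⟨hp⟩
  have hcop : ∀ x ∈ S, p.Coprime (m x) := fun x hx =>
    Nat.coprime_of_lt_prime (hm0 x hx) (by have := Finset.le_sup (f := m) hx; omega) hp
  set A := Algebra.adjoin ℤ ((S : Set K) ∪ range fun i => t i / p)
  have hSA : (S : Set K) ⊆ A := subset_union_left.trans Algebra.subset_adjoin
  have htA : ∀ i, t i / p ∈ A := fun i => Algebra.subset_adjoin (.inr ⟨i, rfl⟩)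
  have hAint : ∀ x ∈ A, IsIntegral (padicConstantCoeffSubring p t) x := by
    refine fun x hx => Algebra.adjoin_induction (fun y hy => ?_)
      (fun n => (isIntegral_algebraMap (R := ℤ) (x := n)).tower_top)
      (fun _ _ _ _ => IsIntegral.add) (fun _ _ _ _ => IsIntegral.mul) hx
    rcases hy with hyS | ⟨i, rfl⟩
    · exact isIntegral_padicConstantCoeffSubring_of_natCast_mul p (hcop y hyS) (hm y hyS)
    · exact isIntegral_algebraMap (R := padicConstantCoeffSubring p t)
        (x := ⟨_, div_natCast_mem_padicConstantCoeffSubring p i⟩)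
  refine ⟨p, A, hp, by omega, ?_, fun hmem => ?_, hSA, fun x hx => ?_⟩
  · exact Subalgebra.fg_def.2 ⟨_, S.finite_toSet.union (finite_range _), rfl⟩
  · exact inv_natCast_self_notMem_padicConstantCoeffSubring p ht
      (inv_mem_of_isIntegral (natCast_mem _ p) (hAint _ hmem))
  · exact isIntegral_int_quotient_mk_of_div_mem hp.ne_zero (hcop x hx) htA (hm x hx)

end GoodReduction

/-! ### The Skolem–Mahler–Lech theorem -/

section SkolemMahlerLech

variable {K ι : Type*} [Field K] [CharZero K] [Fintype ι] {c w : ι → K}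

theorem exists_progression_sum_mul_pow_eq_zero (hw : ∀ j, w j ≠ 0)
    (hinf : {n : ℕ | ∑ j, c j * w j ^ n = 0}.Infinite) :
    ∃ a d : ℕ, d ≠ 0 ∧ ∀ k : ℕ, ∑ j, c j * w j ^ (a + d * k) = 0 := by
  classical
  obtain ⟨p, A, hp, hp2, hfg, hpA, hSA, hint⟩ := exists_subalgebra_fg_isIntegral_quotient
    (Finset.univ.image c ∪ Finset.univ.image w ∪ Finset.univ.image fun j => (w j)⁻¹)
  have hcA : ∀ j, c j ∈ A := fun j => hSA (by simp)
  have hwA : ∀ j, w j ∈ A := fun j => hSA (by simp)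
  have hwA' : ∀ j, (w j)⁻¹ ∈ A := fun j => hSA (by simp)
  have : Algebra.FiniteType ℤ A := (Subalgebra.fg_iff_finiteType A).1 hfg
  have : IsNoetherianRing A := Algebra.FiniteType.isNoetherianRing ℤ A
  have hpunit : ¬ IsUnit (p : A) := fun hunit => by
    obtain ⟨y, hy⟩ := hunit.exists_right_inv
    exact hpA (inv_eq_of_mul_eq_one_right (congrArg Subtype.val hy) ▸ y.2)
  have hcoe : ∀ n, ∑ j, c j * w j ^ n = 0 ↔
      ∑ j, (⟨c j, hcA j⟩ : A) * (⟨w j, hwA j⟩ : A) ^ n = 0 := fun n => by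
    rw [← Subtype.coe_inj]
    simp
  simp only [hcoe] at hinf ⊢
  refine exists_progression_sum_mul_pow_eq_zero_of_isIntegral_quotient hp hp2 hpunit _ _
    (fun j => .of_mul_eq_one ⟨(w j)⁻¹, hwA' j⟩ (Subtype.ext (mul_inv_cancel₀ (hw j))))
    (fun j => hint _ (by simp)) hinf

theorem exists_progression_sum_mul_zpow_eq_zero (hw : ∀ j, w j ≠ 0)
    (hinf : {n : ℤ | ∑ j, c j * w j ^ n = 0}.Infinite) :
    ∃ a d : ℤ, d ≠ 0 ∧ ∀ k : ℕ, ∑ j, c j * w j ^ (a + d * k) = 0 := by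
  have hsplit : {n : ℤ | ∑ j, c j * w j ^ n = 0} ⊆
      (Nat.cast : ℕ → ℤ) '' {n | ∑ j, c j * w j ^ n = 0} ∪
        (fun n : ℕ => -(n : ℤ)) '' {n | ∑ j, c j * (w j)⁻¹ ^ n = 0} := by
    intro n hn
    obtain ⟨m, rfl | rfl⟩ := n.eq_nat_or_neg
    · exact .inl ⟨m, by simpa using hn, rfl⟩
    · exact .inr ⟨m, by simpa using hn, rfl⟩
  rcases Set.infinite_union.1 (hinf.mono hsplit) with hpos | hneg
  · obtain ⟨a, d, hd, hzero⟩ := exists_progression_sum_mul_pow_eq_zero hw hpos.of_image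
    exact ⟨a, d, mod_cast hd, fun k => mod_cast hzero k⟩
  · obtain ⟨a, d, hd, hzero⟩ := exists_progression_sum_mul_pow_eq_zero
      (fun j => inv_ne_zero (hw j)) hneg.of_image
    refine ⟨-a, -d, by simpa using hd, fun k => ?_⟩
    have hexp : (-a + -d * k : ℤ) = -((a + d * k : ℕ) : ℤ) := by push_cast; ring
    simpa only [hexp, zpow_neg, zpow_natCast, inv_pow] using hzero k

end SkolemMahlerLech

/-! ### Sums of powers -/

lemma sum_smul_eq_zero_of_forall_sum_mul_pow_eq_zero {K M ι : Type*} [Field K] [AddCommGroup M]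
    [Module K M] [Fintype ι] {c w : ι → K} (h : ∀ k : ℕ, ∑ j, c j * w j ^ k = 0) (F : K → M) :
    ∑ j, c j • F (w j) = 0 := by
  classical
  have heval : ∀ P : Polynomial K, ∑ j, c j * P.eval (w j) = 0 := fun P => by
    simp only [Polynomial.eval_eq_sum_range, Finset.mul_sum, mul_left_comm (c _)]
    rw [Finset.sum_comm]
    simp only [← Finset.mul_sum, h, mul_zero, Finset.sum_const_zero]
  have hinterp : ∀ j, F (w j) = ∑ y ∈ Finset.univ.image w,
      (Lagrange.basis (Finset.univ.image w) id y).eval (w j) • F y := fun j => by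
    have hj : w j ∈ Finset.univ.image w := Finset.mem_image_of_mem _ (Finset.mem_univ j)
    rw [Finset.sum_eq_single_of_mem _ hj fun y _ hy => by
      rw [← id_eq (w j), Lagrange.eval_basis_of_ne hy hj, zero_smul]]
    exact ((congrArg (· • F (w j)) (Lagrange.eval_basis_self Function.injective_id.injOn hj)).trans
      (one_smul K _)).symm
  simp only [hinterp, Finset.smul_sum, smul_smul]
  rw [Finset.sum_comm]
  simp only [← Finset.sum_smul, heval, zero_smul, Finset.sum_const_zero]

lemma finite_setOf_sum_mul_zpow_eq_zero {K ι : Type*} [Field K] [Fintype ι] [Nonempty ι]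
    {c : ι → K} (hc : ∀ i, c i ≠ 0) {k : ι → ℤ} (hk : Function.Injective k) :
    {x : K | x ≠ 0 ∧ ∑ i, c i * x ^ k i = 0}.Finite := by
  obtain ⟨b, hb⟩ := (Set.finite_range k).bddBelow
  choose e he using fun i => Int.le.dest (hb (Set.mem_range_self i))
  let P : Polynomial K := ∑ i, Polynomial.monomial (e i) (c i)
  have hP : P ≠ 0 := fun hzero => by
    obtain ⟨i₀⟩ := ‹Nonempty ι›
    have hcoeff : P.coeff (e i₀) = c i₀ := by
      rw [Polynomial.finsetSum_coeff, Finset.sum_eq_single_of_mem i₀ (Finset.mem_univ _)]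
      · exact Polynomial.coeff_monomial_same _ _
      · intro i _ hi
        refine Polynomial.coeff_monomial_of_ne _ fun heq => hi (hk ?_)
        rw [← he, ← he, heq]
    exact hc i₀ (by rw [← hcoeff, hzero, Polynomial.coeff_zero])
  refine (Polynomial.finite_setOfPred_isRoot hP).subset fun x ⟨hx, hsum⟩ => ?_
  have hscale : x ^ b * P.eval x = ∑ i, c i * x ^ k i := by
    simp only [P, Polynomial.eval_finsetSum, Polynomial.eval_monomial, Finset.mul_sum, ← he,
      zpow_add₀ hx, zpow_natCast, mul_left_comm]
  exact (mul_eq_zero.1 (hscale.trans hsum)).resolve_left (zpow_ne_zero b hx)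

/-! ### Exponential polynomials -/

lemma exists_eq_zsmul_of_finrank_span_eq_one {ι V : Type*} [Finite ι] [AddCommGroup V] [Module ℚ V]
    {v : ι → V} (h : Module.finrank ℚ (Submodule.span ℚ (Set.range v)) = 1) :
    ∃ β ≠ 0, ∃ k : ι → ℤ, ∀ i, v i = k i • β := by
  obtain ⟨⟨b₀, hb₀⟩, hne, hspan⟩ := finrank_eq_one_iff'.1 h
  have hrat : ∀ i, ∃ q : ℚ, v i = q • b₀ := fun i =>
    (hspan ⟨v i, Submodule.subset_span ⟨i, rfl⟩⟩).imp fun q hq => (congrArg Subtype.val hq).symm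
  choose q hq using hrat
  obtain ⟨⟨D, hD⟩, hint⟩ :=
    IsLocalization.exist_integer_multiples_of_finite (nonZeroDivisors ℤ) q
  choose k hk using hint
  have hD0 : (D : ℚ) ≠ 0 := Int.cast_ne_zero.2 (nonZeroDivisors.ne_zero hD)
  refine ⟨(D : ℚ)⁻¹ • b₀, smul_ne_zero (inv_ne_zero hD0) fun hzero => hne (Subtype.ext hzero), k,
    fun i => ?_⟩
  have hki : (k i : ℚ) = D * q i := by simpa using hk i
  rw [hq, ← Int.cast_smul_eq_zsmul ℚ, smul_smul, hki, mul_right_comm, mul_inv_cancel₀ hD0, one_mul]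

lemma infinite_setOf_eq_zero_of_forall_add_natCast_mul {K M : Type*} [Field K] [CharZero K] [Zero M]
    {f : K → M} {a σ : K} (hσ : σ ≠ 0) (hf : ∀ k : ℕ, f (a + k * σ) = 0) :
    {z | f z = 0}.Infinite :=
  Set.infinite_of_injective_forall_mem (f := fun k : ℕ => a + k * σ)
    (fun _ _ hmn => Nat.cast_injective (mul_right_cancel₀ hσ (add_left_cancel hmn))) hf

lemma IsExpPoly.of_fintype {ι : Type*} [Fintype ι] (lam mu : ι → ℂ) {f : ℂ → ℂ}
    (hf : ∀ z, f z = ∑ i, lam i * exp (mu i * z)) : IsExpPoly f :=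
  ⟨Fintype.card ι, lam ∘ (Fintype.equivFin ι).symm, mu ∘ (Fintype.equivFin ι).symm, fun z =>
    (hf z).trans (Equiv.sum_comp (Fintype.equivFin ι).symm fun i => lam i * exp (mu i * z)).symm⟩

/-- The ring `𝓔`, as a subalgebra of the algebra of all functions `ℂ → ℂ`, which makes the
divisibility lemmas of commutative rings available for `EDvd`. -/
def expPolyAlgebra : Subalgebra ℂ (ℂ → ℂ) where
  carrier := {f | IsExpPoly f}
  mul_mem' := by
    rintro f g ⟨M, a, μ, hf⟩ ⟨N, b, ν, hg⟩
    refine .of_fintype (fun i : Fin M × Fin N => a i.1 * b i.2) (fun i => μ i.1 + ν i.2) fun z => ?_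
    rw [Pi.mul_apply, hf, hg, Finset.sum_mul_sum, ← Finset.sum_product', Finset.univ_product_univ]
    exact Finset.sum_congr rfl fun i _ => by rw [add_mul, exp_add]; ring
  add_mem' := by
    rintro f g ⟨M, a, μ, hf⟩ ⟨N, b, ν, hg⟩
    exact .of_fintype (Sum.elim a b) (Sum.elim μ ν) fun z => by simp [hf, hg]
  algebraMap_mem' c := .of_fintype (fun _ : Unit => c) (fun _ => 0) fun z => by simp

lemma edvd_of_dvd {h f : expPolyAlgebra} (hdvd : h ∣ f) : EDvd h f := by
  obtain ⟨q, rfl⟩ := hdvd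
  exact ⟨q, q.2, rfl⟩

/-- The exponential polynomial `z ↦ e^{μ(z - a)}`, normalized to take the value `1` at `a`. -/
def shiftedExp (a μ : ℂ) : expPolyAlgebra :=
  ⟨fun z => exp (μ * (z - a)), .of_fintype (fun _ : Unit => exp (-(μ * a))) (fun _ => μ) fun z => by
    simp [← exp_add, mul_sub, neg_add_eq_sub]⟩

lemma coe_shiftedExp_apply (a μ z : ℂ) : (shiftedExp a μ : ℂ → ℂ) z = exp (μ * (z - a)) := rfl

lemma shiftedExp_add_natCast_mul (a μ γ : ℂ) (n : ℕ) :
    shiftedExp a (μ + n * γ) = shiftedExp a μ * shiftedExp a γ ^ n := by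
  ext z
  simp only [MulMemClass.coe_mul, SubmonoidClass.coe_pow, Pi.mul_apply, Pi.pow_apply,
    coe_shiftedExp_apply, ← exp_nat_mul, ← exp_add]
  ring_nf

lemma shiftedExp_sub_one_dvd_sub (a μ γ : ℂ) (n : ℤ) :
    shiftedExp a γ - 1 ∣ shiftedExp a (μ + n * γ) - shiftedExp a μ := by
  have hnat : ∀ (ν : ℂ) (m : ℕ),
      shiftedExp a γ - 1 ∣ shiftedExp a (ν + m * γ) - shiftedExp a ν := fun ν m => by
    rw [shiftedExp_add_natCast_mul, ← mul_sub_one]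
    exact (sub_one_dvd_pow_sub_one _ m).mul_left _
  obtain ⟨m, rfl | rfl⟩ := n.eq_nat_or_neg
  · exact_mod_cast hnat μ m
  · rw [dvd_sub_comm]
    simpa using hnat (μ + (-m : ℤ) * γ) m

theorem shiftedExp_sub_one_dvd_of_forall_eq_zero {F : ℂ → ℂ} (hF : IsExpPoly F) {a σ : ℂ}
    (hσ : σ ≠ 0) (hzero : ∀ k : ℕ, F (a + k * σ) = 0) :
    shiftedExp a (2 * Real.pi * I / σ) - 1 ∣ (⟨F, hF⟩ : expPolyAlgebra) := by
  obtain ⟨N, lam, mu, hFsum⟩ := id hF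
  set c : Fin N → ℂ := fun i => lam i * exp (mu i * a)
  set w : Fin N → ℂ := fun i => exp (mu i * σ)
  have hpow : ∀ k : ℕ, ∑ i, c i * w i ^ k = 0 := fun k => by
    rw [← hzero k, hFsum]
    refine Finset.sum_congr rfl fun i _ => ?_
    rw [mul_assoc, ← exp_nat_mul, ← exp_add]
    ring_nf
  have hrep : ∑ i, c i • shiftedExp a (log (w i) / σ) = 0 :=
    sum_smul_eq_zero_of_forall_sum_mul_pow_eq_zero hpow fun x => shiftedExp a (log x / σ)
  have hFshift : (⟨F, hF⟩ : expPolyAlgebra) =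
      ∑ i, c i • (shiftedExp a (mu i) - shiftedExp a (log (w i) / σ)) := by
    simp only [smul_sub, Finset.sum_sub_distrib, hrep, sub_zero]
    ext z
    simp [hFsum, c, coe_shiftedExp_apply, mul_assoc, ← exp_add, mul_sub]
  rw [hFshift]
  refine Finset.dvd_sum fun i _ => dvd_smul_of_dvd _ ?_
  obtain ⟨n, hn⟩ := exp_eq_exp_iff_exists_int.1 (exp_log (exp_ne_zero (mu i * σ))).symm
  have hmu : mu i = log (w i) / σ + n * (2 * Real.pi * I / σ) := by
    rw [← mul_div_assoc, ← add_div, eq_div_iff hσ, hn]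
  rw [congrArg (shiftedExp a) hmu]
  exact shiftedExp_sub_one_dvd_sub _ _ _ n

theorem IsExpPoly.exists_progression_eq_zero {g : ℂ → ℂ} (hg : IsExpPoly g) {a τ : ℂ}
    (hinf : {n : ℤ | g (a + n * τ) = 0}.Infinite) :
    ∃ b d : ℤ, d ≠ 0 ∧ ∀ k : ℕ, g (a + (b + d * k : ℤ) * τ) = 0 := by
  obtain ⟨N, lam, mu, hgsum⟩ := hg
  have hpow : ∀ n : ℤ, g (a + n * τ) = ∑ i, lam i * exp (mu i * a) * exp (mu i * τ) ^ n :=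
    fun n => by
      rw [hgsum]
      refine Finset.sum_congr rfl fun i _ => ?_
      rw [mul_assoc, ← exp_int_mul, ← exp_add]
      ring_nf
  simp only [hpow] at hinf ⊢
  exact exists_progression_sum_mul_zpow_eq_zero (fun i => exp_ne_zero _) hinf

lemma IsSimple.exists_eq_sum_zpow {f : ℂ → ℂ} (hf : IsSimple f) :
    ∃ (N : ℕ) (_ : NeZero N) (lam : Fin N → ℂ) (k : Fin N → ℤ) (β : ℂ), (∀ i, lam i ≠ 0) ∧
      Function.Injective k ∧ β ≠ 0 ∧ ∀ z, f z = ∑ i, lam i * exp (β * z) ^ k i := by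
  obtain ⟨N, lam, mu, ⟨hlam, hmu, hfsum⟩, hrank⟩ := hf
  obtain ⟨β, hβ, k, hk⟩ := exists_eq_zsmul_of_finrank_span_eq_one hrank
  refine ⟨N, ⟨?_⟩, lam, k, β, hlam, fun i j hij => hmu (by rw [hk, hk, hij]), hβ, fun z => ?_⟩
  · rintro rfl
    rw [Set.range_eq_empty, Submodule.span_empty, finrank_bot] at hrank
    exact zero_ne_one hrank
  · simp only [hfsum, hk, ← exp_int_mul, zsmul_eq_mul, mul_assoc]

lemma IsSimple.exists_periodic_finite_zeros {f : ℂ → ℂ} (hf : IsSimple f) :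
    ∃ τ ≠ 0, Function.Periodic f τ ∧
      ∃ Z : Set ℂ, Z.Finite ∧ ∀ z, f z = 0 → ∃ z₀ ∈ Z, ∃ n : ℤ, z = z₀ + n * τ := by
  obtain ⟨N, _, lam, k, β, hlam, hk, hβ, hfsum⟩ := hf.exists_eq_sum_zpow
  refine ⟨2 * Real.pi * I / β, div_ne_zero two_pi_I_ne_zero hβ, fun z => ?_, _,
    (finite_setOf_sum_mul_zpow_eq_zero hlam hk).image fun x => log x / β, fun z hz => ?_⟩
  · simp only [hfsum, mul_add, mul_div_cancel₀ _ hβ, exp_periodic _]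
  · refine ⟨_, ⟨exp (β * z), ⟨exp_ne_zero _, (hfsum z).symm.trans hz⟩, rfl⟩, ?_⟩
    obtain ⟨n, hn⟩ := exp_eq_exp_iff_exists_int.1 (exp_log (exp_ne_zero (β * z))).symm
    refine ⟨n, ?_⟩
    rw [← mul_div_assoc, ← add_div, eq_div_iff hβ, mul_comm z, ← hn]

theorem IsSimple.exists_infinite_int_zeros {f g : ℂ → ℂ} (hf : IsSimple f)
    (hinf : {z | f z = 0 ∧ g z = 0}.Infinite) :
    ∃ z₀ τ : ℂ, τ ≠ 0 ∧ (∀ n : ℤ, f (z₀ + n * τ) = 0) ∧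
      {n : ℤ | g (z₀ + n * τ) = 0}.Infinite := by
  obtain ⟨τ, hτ, hper, Z, hZ, hcover⟩ := hf.exists_periodic_finite_zeros
  have hfzero : ∀ z₀ (n : ℤ), f (z₀ + n * τ) = f z₀ := fun z₀ n => hper.int_mul n z₀
  by_contra! hfin
  refine hinf (((hZ.inter_of_left {z | f z = 0}).biUnion fun z₀ hz₀ =>
    (hfin z₀ τ hτ fun n => (hfzero z₀ n).trans hz₀.2).image fun n : ℤ => z₀ + n * τ).subset ?_)
  rintro z ⟨hfz, hgz⟩
  obtain ⟨z₀, hz₀, n, rfl⟩ := hcover z hfz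
  exact Set.mem_biUnion ⟨hz₀, (hfzero z₀ n).symm.trans hfz⟩ ⟨n, hgz, rfl⟩

lemma IsSimple.isExpPoly {f : ℂ → ℂ} (hf : IsSimple f) : IsExpPoly f :=
  let ⟨N, lam, mu, hrep, _⟩ := hf
  ⟨N, lam, mu, hrep.2.2⟩

lemma not_eUnit_of_apply_eq_zero {f : ℂ → ℂ} {z : ℂ} (hz : f z = 0) : ¬ EUnit f := by
  rintro ⟨-, g, -, hfg⟩
  simpa [hz] using congrFun hfg z

lemma shiftedExp_sub_one_apply_add_natCast_mul (a : ℂ) {σ : ℂ} (hσ : σ ≠ 0) (k : ℕ) :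
    (shiftedExp a (2 * Real.pi * I / σ) - 1 : expPolyAlgebra).1 (a + k * σ) = 0 := by
  have harg : 2 * Real.pi * I / σ * (a + k * σ - a) = k * (2 * Real.pi * I) := by
    field_simp
    ring
  exact sub_eq_zero.2 ((congrArg exp harg).trans (exp_nat_mul_two_pi_mul_I k))

/-- If `f` is simple and `g` is a nonzero exponential polynomial with infinitely many common
zeros with `f`, then `f` and `g` have a common non-unit divisor with infinitely many zeros. -/
theorem shapiro_simple_case
    (f g : ℂ → ℂ) (hf : IsSimple f) (hg : IsExpPoly g) (hg0 : g ≠ 0)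
    (hinf : {z : ℂ | f z = 0 ∧ g z = 0}.Infinite) :
    ∃ h : ℂ → ℂ, IsExpPoly h ∧ ¬ EUnit h ∧ {z : ℂ | h z = 0}.Infinite ∧
      EDvd h f ∧ EDvd h g := by
  obtain ⟨z₀, τ, hτ, hfzero, hginf⟩ := hf.exists_infinite_int_zeros hinf
  obtain ⟨b, d, hd, hgzero⟩ := hg.exists_progression_eq_zero hginf
  set a := z₀ + b * τ
  set σ := d * τ
  have hσ : σ ≠ 0 := mul_ne_zero (Int.cast_ne_zero.2 hd) hτ
  have hstep : ∀ k : ℕ, a + k * σ = z₀ + (b + d * k : ℤ) * τ := fun k => by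
    push_cast
    ring
  refine ⟨(shiftedExp a (2 * Real.pi * I / σ) - 1 : expPolyAlgebra), Subtype.prop _,
    not_eUnit_of_apply_eq_zero (shiftedExp_sub_one_apply_add_natCast_mul a hσ 0),
    infinite_setOf_eq_zero_of_forall_add_natCast_mul hσ
      (shiftedExp_sub_one_apply_add_natCast_mul a hσ),
    edvd_of_dvd (shiftedExp_sub_one_dvd_of_forall_eq_zero hf.isExpPoly hσ fun k => ?_),
    edvd_of_dvd (shiftedExp_sub_one_dvd_of_forall_eq_zero hg hσ fun k => ?_)⟩
  · rw [hstep]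
    exact hfzero _
  · rw [hstep]
    exact hgzero k
end
end

section
/- Let h(z) = λ₁e^{μ₁z} + ⋯ + λ_N e^{μ_N z} be an exponential polynomial with λ_j, μ_j ∈ ℂ. If h(n) = 0 for every integer n, then the function z ↦ sin(πz) = (e^{iπz} − e^{−iπz})/(2i), which is an element of 𝓔, divides h in the ring 𝓔. -/
open Complex Set

noncomputable section

/-!
At a natural number `n`, `h n = ∑ i, lam i * exp (mu i) ^ n`. If this vanishes for all `n < N`, then
by Lagrange interpolation the `lam i` with a common value of `exp (mu i)` sum to zero. Hence
replacing every exponent `mu i` by the representative `log (exp (mu i))` of its class modulo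
`2πi ℤ` turns `h` into zero. The replacement changes `h` only by multiples of
`e^{μz} - e^{νz}` with `μ - ν ∈ 2πi ℤ`, and such a difference is divisible by `e^{2πiz} - 1`,
which is an associate of `sin (πz)` in `𝓔`.
-/

section PowerSums

open Polynomial

variable {ι : Type*} [Fintype ι]

theorem sum_mul_eval_eq_zero_of_sum_mul_pow_eq_zero {R : Type*} [CommSemiring R]
    {lam a : ι → R} {N : ℕ} (hpow : ∀ n < N, ∑ i, lam i * a i ^ n = 0)
    {p : R[X]} (hp : p.degree < N) : ∑ i, lam i * p.eval (a i) = 0 := by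
  have eval_eq (x : R) : p.eval x = ∑ n ∈ Finset.range N, p.coeff n * x ^ n := by
    rw [eval_eq_sum]
    refine sum_eq_of_subset _ (fun _ => zero_mul _) fun n hn => Finset.mem_range.mpr ?_
    exact Nat.cast_lt.mp ((le_degree_of_mem_supp n hn).trans_lt hp)
  calc ∑ i, lam i * p.eval (a i)
      = ∑ n ∈ Finset.range N, p.coeff n * ∑ i, lam i * a i ^ n := by
        simp only [eval_eq, Finset.mul_sum, mul_left_comm]
        exact Finset.sum_comm
    _ = 0 := Finset.sum_eq_zero fun n hn => by rw [hpow n (Finset.mem_range.mp hn), mul_zero]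

variable {K : Type*} [Field K] {lam a : ι → K}

theorem sum_fiber_eq_zero_of_sum_mul_pow_eq_zero [DecidableEq K]
    (hpow : ∀ n < Fintype.card ι, ∑ i, lam i * a i ^ n = 0) (b : K) :
    ∑ i with a i = b, lam i = 0 := by
  let nodes := Finset.univ.image a
  let p := Lagrange.interpolate nodes id (Pi.single b 1)
  have degree_lt : p.degree < Fintype.card ι :=
    (Lagrange.degree_interpolate_lt _ (injOn_id _)).trans_le
      (Nat.cast_le.mpr Finset.card_image_le)
  have eval_eq (i : ι) : p.eval (a i) = if a i = b then 1 else 0 := by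
    rw [← Pi.single_apply]
    exact Lagrange.eval_interpolate_at_node _ (injOn_id _)
      (Finset.mem_image_of_mem a (Finset.mem_univ i))
  simpa only [eval_eq, mul_ite, mul_one, mul_zero, Finset.sum_filter] using
    sum_mul_eval_eq_zero_of_sum_mul_pow_eq_zero hpow degree_lt

theorem sum_smul_comp_eq_zero_of_sum_mul_pow_eq_zero {M : Type*} [AddCommMonoid M] [Module K M]
    (hpow : ∀ n < Fintype.card ι, ∑ i, lam i * a i ^ n = 0) (g : K → M) :
    ∑ i, lam i • g (a i) = 0 := by
  classical
  rw [← Finset.sum_fiberwise_of_maps_to fun i _ => Finset.mem_image_of_mem a (Finset.mem_univ i)]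
  refine Finset.sum_eq_zero fun b _ => ?_
  calc ∑ i with a i = b, lam i • g (a i)
      = (∑ i with a i = b, lam i) • g b := by
        rw [Finset.sum_smul]
        exact Finset.sum_congr rfl fun i hi => by rw [(Finset.mem_filter.mp hi).2]
    _ = 0 := by rw [sum_fiber_eq_zero_of_sum_mul_pow_eq_zero hpow, zero_smul]

end PowerSums

namespace IsExpPoly

variable {f g : ℂ → ℂ}

theorem of_fintype_s4 {ι : Type*} [Fintype ι] (lam mu : ι → ℂ)
    (hf : ∀ z : ℂ, f z = ∑ i, lam i * exp (mu i * z)) : IsExpPoly f := by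
  let e := (Fintype.equivFin ι).symm
  refine ⟨Fintype.card ι, lam ∘ e, mu ∘ e, fun z => ?_⟩
  rw [hf z]
  exact (e.sum_comp fun i => lam i * exp (mu i * z)).symm

theorem const_mul_exp (c μ : ℂ) : IsExpPoly fun z => c * exp (μ * z) :=
  ⟨1, fun _ => c, fun _ => μ, fun _ => by simp⟩

theorem add (hf : IsExpPoly f) (hg : IsExpPoly g) : IsExpPoly (f + g) := by
  obtain ⟨N, lam, mu, hf⟩ := hf
  obtain ⟨M, lam', mu', hg⟩ := hg
  exact of_fintype_s4 (Sum.elim lam lam') (Sum.elim mu mu') fun z => by simp [hf, hg]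

theorem mul (hf : IsExpPoly f) (hg : IsExpPoly g) : IsExpPoly (f * g) := by
  obtain ⟨N, lam, mu, hf⟩ := hf
  obtain ⟨M, lam', mu', hg⟩ := hg
  refine of_fintype_s4 (fun ij : Fin N × Fin M => lam ij.1 * lam' ij.2)
    (fun ij => mu ij.1 + mu' ij.2) fun z => ?_
  simp only [Pi.mul_apply, hf, hg, Finset.sum_mul_sum, ← Finset.univ_product_univ,
    Finset.sum_product, add_mul, exp_add, mul_mul_mul_comm]

end IsExpPoly

/-- The ring `𝓔` of exponential polynomials, as a subalgebra of all functions `ℂ → ℂ`, so that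
divisibility in `𝓔` is divisibility in a commutative ring. -/
def expPolySubalgebra : Subalgebra ℂ (ℂ → ℂ) where
  carrier := {f | IsExpPoly f}
  mul_mem' := IsExpPoly.mul
  add_mem' := IsExpPoly.add
  algebraMap_mem' c := by simpa [Pi.algebraMap_def] using IsExpPoly.const_mul_exp c 0

theorem EDvd.of_dvd {f g : expPolySubalgebra} (hdvd : f ∣ g) : EDvd (f : ℂ → ℂ) g := by
  obtain ⟨q, rfl⟩ := hdvd
  exact ⟨q, q.2, rfl⟩

/-- The exponential `z ↦ e^{μz}` as an element of `𝓔`. -/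
def expMonomial (μ : ℂ) : expPolySubalgebra :=
  ⟨fun z => exp (μ * z), by simpa [expPolySubalgebra] using IsExpPoly.const_mul_exp 1 μ⟩

theorem coe_sum_smul_expMonomial {ι : Type*} [Fintype ι] (lam mu : ι → ℂ) :
    ((∑ i, lam i • expMonomial (mu i) : expPolySubalgebra) : ℂ → ℂ) =
      fun z => ∑ i, lam i * exp (mu i * z) := by
  ext z
  simp [expMonomial]

theorem expMonomial_zero : expMonomial 0 = 1 := by
  ext z
  simp [expMonomial]

theorem expMonomial_add (μ ν : ℂ) : expMonomial (μ + ν) = expMonomial μ * expMonomial ν := by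
  ext z
  simp [expMonomial, add_mul, exp_add]

theorem expMonomial_nat_mul (n : ℕ) (μ : ℂ) : expMonomial (n * μ) = expMonomial μ ^ n := by
  ext z
  simp [expMonomial, mul_assoc, exp_nat_mul]

/-- The function `z ↦ sin (πz)` as an element of `𝓔`. -/
def sinPi : expPolySubalgebra :=
  (2 * I)⁻¹ • (expMonomial (I * Real.pi) - expMonomial (-(I * Real.pi)))

theorem coe_sinPi : (sinPi : ℂ → ℂ) =
    fun z => (exp (I * Real.pi * z) - exp (-(I * Real.pi * z))) / (2 * I) := by
  ext z
  simp [sinPi, expMonomial, div_eq_inv_mul]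

theorem sinPi_dvd_expMonomial_two_pi_I_sub_one : sinPi ∣ expMonomial (2 * Real.pi * I) - 1 := by
  refine ⟨(2 * I) • expMonomial (I * Real.pi), ?_⟩
  rw [sinPi, smul_mul_smul_comm, inv_mul_cancel₀ (by simp), one_smul, sub_mul,
    ← expMonomial_add, ← expMonomial_add, neg_add_cancel, expMonomial_zero]
  ring_nf

theorem sinPi_dvd_expMonomial_add_nat_mul_two_pi_I_sub (ν : ℂ) (n : ℕ) :
    sinPi ∣ expMonomial (ν + n * (2 * Real.pi * I)) - expMonomial ν := by
  rw [expMonomial_add, expMonomial_nat_mul, ← mul_sub_one]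
  exact (sinPi_dvd_expMonomial_two_pi_I_sub_one.trans (sub_one_dvd_pow_sub_one _ n)).mul_left _

theorem sinPi_dvd_expMonomial_sub {μ ν : ℂ} (hexp : exp μ = exp ν) :
    sinPi ∣ expMonomial μ - expMonomial ν := by
  obtain ⟨k, rfl⟩ := exp_eq_exp_iff_exists_int.mp hexp
  obtain ⟨n, rfl | rfl⟩ := k.eq_nat_or_neg
  · exact sinPi_dvd_expMonomial_add_nat_mul_two_pi_I_sub ν n
  · rw [dvd_sub_comm]
    convert sinPi_dvd_expMonomial_add_nat_mul_two_pi_I_sub _ n using 3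
    push_cast
    ring

theorem sinPi_dvd_sum_smul_expMonomial {ι : Type*} [Fintype ι] {lam mu : ι → ℂ}
    (hpow : ∀ n < Fintype.card ι, ∑ i, lam i * exp (mu i) ^ n = 0) :
    sinPi ∣ ∑ i, lam i • expMonomial (mu i) := by
  let rep (i : ι) : ℂ := log (exp (mu i))
  have sum_rep : ∑ i, lam i • expMonomial (rep i) = 0 :=
    sum_smul_comp_eq_zero_of_sum_mul_pow_eq_zero hpow fun w => expMonomial (log w)
  have sum_eq : ∑ i, lam i • expMonomial (mu i) =
      ∑ i, lam i • (expMonomial (mu i) - expMonomial (rep i)) := by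
    simp only [smul_sub, Finset.sum_sub_distrib, sum_rep, sub_zero]
  rw [sum_eq]
  refine Finset.dvd_sum fun i _ => dvd_smul_of_dvd (lam i) (sinPi_dvd_expMonomial_sub ?_)
  exact (exp_log (exp_ne_zero (mu i))).symm

theorem sin_pi_dvd_of_vanishes_on_integers_general {ι : Type*} [Fintype ι]
    (lam mu : ι → ℂ) (h : ℂ → ℂ) (hrep : ∀ z : ℂ, h z = ∑ i, lam i * exp (mu i * z))
    (hvanish : ∀ n : ℕ, n < Fintype.card ι → h n = 0) :
    EDvd (fun z : ℂ => (exp (I * Real.pi * z) - exp (-(I * Real.pi * z))) / (2 * I)) h := by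
  have hpow (n : ℕ) (hn : n < Fintype.card ι) : ∑ i, lam i * exp (mu i) ^ n = 0 := by
    simpa only [hrep, mul_comm _ (n : ℂ), exp_nat_mul] using hvanish n hn
  have h_eq : h = (∑ i, lam i • expMonomial (mu i) : expPolySubalgebra) :=
    (funext hrep).trans (coe_sum_smul_expMonomial lam mu).symm
  rw [h_eq, ← coe_sinPi]
  exact EDvd.of_dvd (sinPi_dvd_sum_smul_expMonomial hpow)

/-- If an exponential polynomial vanishes at all integers, then `sin (π z)`
(i.e. `(e^{iπz} - e^{-iπz})/(2i)`) divides it in the ring `𝓔`. -/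
theorem sin_pi_dvd_of_vanishes_on_integers
    (N : ℕ) (lam mu : Fin N → ℂ) (h : ℂ → ℂ)
    (hrep : ∀ z : ℂ, h z = ∑ i, lam i * Complex.exp (mu i * z))
    (hvanish : ∀ n : ℤ, h (n : ℂ) = 0) :
    EDvd (fun z : ℂ =>
        (Complex.exp (Complex.I * (Real.pi : ℂ) * z) -
          Complex.exp (-(Complex.I * (Real.pi : ℂ) * z))) / (2 * Complex.I)) h :=
  sin_pi_dvd_of_vanishes_on_integers_general lam mu h hrep fun n _ => hvanish n
end
end

section
/- Let f ∈ 𝓔 be an exponential polynomial that vanishes at infinitely many integers. Then there exist a positive integer Δ and a nonempty set of residues d₁,…,d_l modulo Δ such that f(n) = 0 for every integer n congruent to some d_i modulo Δ, and the set of integers n with f(n) = 0 that are not congruent to any d_i modulo Δ is finite. (Skolem–Mahler–Lech theorem for exponential polynomials.) -/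
open Complex Set

noncomputable section

/-!
The zeros of a power sum `∑ i, c i * a i ^ n` are studied `p`-adically. A transcendence basis of the
field generated by the `c i` and `a i` can be sent to algebraically independent `p`-adic integers
with prescribed residues modulo `p`, because `p * s + c` reduces to `c` and is independent when `s`
is. For a suitable prime `p` this makes the leading coefficients of polynomials vanishing at the
`a i` and `(a i)⁻¹` into units, so the field embeds in a finite extension of `ℚ_[p]` with every
`a i` of norm one. By compactness some common power `a i ^ N` then lies in the image of the
`p`-adic exponential, so on each residue class modulo `N` the power sum is interpolated by a
function analytic on the closed unit ball. Zeros of such a function are isolated unless it vanishes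
locally, and compactness of the ball yields one modulus `p ^ k` on whose residue classes the power
sum either vanishes identically or has at most one zero.
-/

/-- The positive integer `N` is a Skolem modulus for `Z` if each residue class modulo `N` either is
contained in `Z` or meets `Z` in a finite set. Since every set would have Skolem modulus `0`,
positivity is part of the definition. -/
def IsSkolemModulus (Z : Set ℤ) (N : ℤ) : Prop :=
  0 < N ∧ ∀ r : ℤ, {n | n ≡ r [ZMOD N]} ⊆ Z ∨ ({n | n ≡ r [ZMOD N]} ∩ Z).Finite

namespace IsSkolemModulus

variable {Z : Set ℤ} {N M : ℤ}

theorem of_dvd (h : IsSkolemModulus Z N) (hM : 0 < M) (hdvd : N ∣ M) : IsSkolemModulus Z M := by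
  have hsub (r : ℤ) : {n | n ≡ r [ZMOD M]} ⊆ {n | n ≡ r [ZMOD N]} := fun _ hn ↦ hn.of_dvd hdvd
  exact ⟨hM, fun r ↦ (h.2 r).imp (hsub r).trans
    fun hfin ↦ hfin.subset (inter_subset_inter_left Z (hsub r))⟩

theorem exists_residues (h : IsSkolemModulus Z N) (hZ : Z.Infinite) :
    ∃ D : Finset ℤ, D.Nonempty ∧ (∀ d ∈ D, 0 ≤ d ∧ d < N) ∧
      (∀ n, (∃ d ∈ D, n ≡ d [ZMOD N]) → n ∈ Z) ∧
      {n | n ∈ Z ∧ ∀ d ∈ D, ¬ n ≡ d [ZMOD N]}.Finite := by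
  classical
  let D : Finset ℤ := {d ∈ Finset.Ico 0 N | {n | n ≡ d [ZMOD N]} ⊆ Z}
  have hfin : {n | n ∈ Z ∧ ∀ d ∈ D, ¬ n ≡ d [ZMOD N]}.Finite := by
    let E : Set ℤ := {d ∈ Ico 0 N | ({n | n ≡ d [ZMOD N]} ∩ Z).Finite}
    have hE : E.Finite := (finite_Ico 0 N).subset (sep_subset _ _)
    refine (hE.biUnion fun d hd ↦ hd.2).subset fun n ⟨hnZ, hnD⟩ ↦ ?_
    have hmem : n % N ∈ Ico 0 N := ⟨Int.emod_nonneg n h.1.ne', Int.emod_lt_of_pos n h.1⟩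
    have hmod : n ≡ n % N [ZMOD N] := (Int.mod_modEq n N).symm
    have hnotSub : ¬ {k | k ≡ n % N [ZMOD N]} ⊆ Z := fun hsub ↦
      hnD (n % N) (Finset.mem_filter.2 ⟨Finset.mem_Ico.2 hmem, hsub⟩) hmod
    exact mem_biUnion ⟨hmem, (h.2 _).resolve_left hnotSub⟩ ⟨hmod, hnZ⟩
  refine ⟨D, ?_, fun d hd ↦ Finset.mem_Ico.1 (Finset.mem_filter.1 hd).1, ?_, hfin⟩
  · by_contra! hD
    exact hZ (by simpa [hD] using hfin)
  · rintro n ⟨d, hd, hnd⟩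
    exact (Finset.mem_filter.1 hd).2 hnd

end IsSkolemModulus

theorem setOf_modEq_mul_eq_image (N M r : ℤ) :
    {n | n ≡ r [ZMOD N * M]} = (fun q ↦ r % N + N * q) '' {q | q ≡ r / N [ZMOD M]} := by
  have hr : r % N + N * (r / N) = r := Int.emod_add_mul_ediv r N
  apply Subset.antisymm
  · intro n hn
    obtain ⟨t, ht⟩ := hn.symm.dvd
    exact ⟨r / N + M * t, Int.modEq_iff_dvd.2 ⟨-t, by ring⟩, by linear_combination hr - ht⟩
  · rintro _ ⟨q, hq, rfl⟩
    have h : N * q ≡ N * (r / N) [ZMOD N * M] := hq.mul_left'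
    simpa only [mem_ofPred_eq, hr] using h.add_left (r % N)

theorem isSkolemModulus_mul_of_forall_residue {Z : Set ℤ} {N M : ℤ} (hN : 0 < N) (hM : 0 < M)
    (h : ∀ m ∈ Finset.Ico 0 N, IsSkolemModulus ((fun q ↦ m + N * q) ⁻¹' Z) M) :
    IsSkolemModulus Z (N * M) := by
  refine ⟨mul_pos hN hM, fun r ↦ ?_⟩
  have hr : r % N ∈ Finset.Ico 0 N :=
    Finset.mem_Ico.2 ⟨Int.emod_nonneg r hN.ne', Int.emod_lt_of_pos r hN⟩
  rw [setOf_modEq_mul_eq_image, ← image_inter_preimage, image_subset_iff]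
  exact ((h _ hr).2 (r / N)).imp id fun hfin ↦ hfin.image _

theorem exists_isSkolemModulus_of_forall_residue {Z : Set ℤ} {N : ℤ} (hN : 0 < N)
    (h : ∀ m, ∃ M, IsSkolemModulus ((fun q ↦ m + N * q) ⁻¹' Z) M) : ∃ M, IsSkolemModulus Z M := by
  choose M hM using h
  have hpos : 0 < ∏ m ∈ Finset.Ico 0 N, M m := Finset.prod_pos fun m _ ↦ (hM m).1
  exact ⟨_, isSkolemModulus_mul_of_forall_residue hN hpos fun m hm ↦
    (hM m).of_dvd hpos (Finset.dvd_prod_of_mem M hm)⟩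

/-- The integers at which the power sum `n ↦ ∑ i, c i * a i ^ n` vanishes. -/
def powerSumZeros {K ι : Type*} [DivisionRing K] [Fintype ι] (c a : ι → K) : Set ℤ :=
  {n | ∑ i, c i * a i ^ n = 0}

section PowerSumZeros

variable {K L ι : Type*} [DivisionRing K] [DivisionRing L] [Fintype ι]

theorem powerSumZeros_map (φ : K →+* L) (c a : ι → K) :
    powerSumZeros (φ ∘ c) (φ ∘ a) = powerSumZeros c a := by
  ext n
  simp only [powerSumZeros, mem_ofPred_eq, Function.comp_apply, ← map_zpow₀, ← map_mul, ← map_sum,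
    map_eq_zero]

theorem preimage_powerSumZeros (c : ι → K) {a : ι → K} (ha : ∀ i, a i ≠ 0) (m N : ℤ) :
    (fun q ↦ m + N * q) ⁻¹' powerSumZeros c a =
      powerSumZeros (fun i ↦ c i * a i ^ m) (fun i ↦ a i ^ N) := by
  ext q
  simp only [powerSumZeros, mem_preimage, mem_ofPred_eq, zpow_add₀ (ha _), zpow_mul, mul_assoc]

end PowerSumZeros

section PadicAnalysis

open Metric Topology Filter
open NormedSpace hiding exp

theorem exists_forall_ball_eq_zero_or_subsingleton {𝕜 E : Type*} [NontriviallyNormedField 𝕜]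
    [NormedAddCommGroup E] [NormedSpace 𝕜 E] {f : 𝕜 → E} {s : Set 𝕜} (hs : IsCompact s)
    (hf : AnalyticOnNhd 𝕜 f s) :
    ∃ δ > 0, ∀ x ∈ s, (∀ y ∈ ball x δ, f y = 0) ∨ (ball x δ ∩ f ⁻¹' {0}).Subsingleton := by
  have hlocal (z : s) : ∃ U : Set 𝕜, IsOpen U ∧ z.1 ∈ U ∧
      ((∀ y ∈ U, f y = 0) ∨ (U ∩ f ⁻¹' {0}).Subsingleton) := by
    rcases (hf z z.2).eventually_eq_zero_or_eventually_ne_zero with hzero | hne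
    · obtain ⟨U, hU, hUopen, hzU⟩ := _root_.eventually_nhds_iff.1 hzero
      exact ⟨U, hUopen, hzU, .inl hU⟩
    · obtain ⟨U, hU, hUopen, hzU⟩ := _root_.eventually_nhds_iff.1 (eventually_nhdsWithin_iff.1 hne)
      have heq : ∀ y ∈ U ∩ f ⁻¹' {0}, y = z := fun y hy ↦ by_contra fun h ↦ hU y hy.1 h hy.2
      exact ⟨U, hUopen, hzU, .inr fun y hy y' hy' ↦ (heq y hy).trans (heq y' hy').symm⟩
  choose U hUopen hzU hU using hlocal
  obtain ⟨δ, hδ, hball⟩ := lebesgue_number_lemma_of_metric hs hUopen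
    fun z hz ↦ mem_iUnion.2 ⟨⟨z, hz⟩, hzU ⟨z, hz⟩⟩
  refine ⟨δ, hδ, fun x hx ↦ ?_⟩
  obtain ⟨z, hz⟩ := hball x hx
  exact (hU z).imp (fun h y hy ↦ h y (hz hy)) fun h ↦ h.anti (inter_subset_inter_left _ hz)

theorem image_exp_eball_mem_nhds_one {𝕜 : Type*} [NontriviallyNormedField 𝕜] [CompleteSpace 𝕜]
    [CharZero 𝕜] (h : 0 < (expSeries 𝕜 𝕜).radius) :
    NormedSpace.exp '' eball (0 : 𝕜) (expSeries 𝕜 𝕜).radius ∈ 𝓝 1 := by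
  rw [← exp_zero (𝔸 := 𝕜), ← (hasStrictDerivAt_exp_zero_of_radius_pos h).map_nhds_eq one_ne_zero]
  exact image_mem_map (eball_mem_nhds _ h)

theorem mul_mem_eball_zero {R : Type*} [SeminormedRing R] {x z : R} {r : ENNReal}
    (hz : ‖z‖ ≤ 1) (hx : x ∈ eball 0 r) : z * x ∈ eball 0 r := by
  rw [mem_eball_zero_iff] at hx ⊢
  refine lt_of_le_of_lt ?_ hx
  rw [enorm_le_iff_norm_le]
  exact (norm_mul_le z x).trans (mul_le_of_le_one_left (norm_nonneg x) hz)

theorem exp_intCast_mul {𝕜 : Type*} [NontriviallyNormedField 𝕜] [CompleteSpace 𝕜] [CharZero 𝕜]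
    [IsUltrametricDist 𝕜] {x : 𝕜} (hx : x ∈ eball 0 (expSeries 𝕜 𝕜).radius) (n : ℤ) :
    NormedSpace.exp (n * x) = NormedSpace.exp x ^ n := by
  have hmem (k : ℕ) : (k : 𝕜) * x ∈ eball 0 (expSeries 𝕜 𝕜).radius :=
    mul_mem_eball_zero (IsUltrametricDist.norm_natCast_le_one 𝕜 k) hx
  have hnat (k : ℕ) : NormedSpace.exp (k * x) = NormedSpace.exp x ^ k := by
    induction k with
    | zero => simp
    | succ k ih =>
      rw [pow_succ, ← ih, ← exp_add_of_mem_ball (𝕂 := 𝕜) (hmem k) hx, Nat.cast_succ, add_one_mul]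
  obtain ⟨k, rfl | rfl⟩ := n.eq_nat_or_neg
  · simpa using hnat k
  · simpa [hnat k] using exp_neg_of_mem_ball (𝕂 := 𝕜) (hmem k)

theorem exists_pow_mem_of_norm_eq_one {F ι : Type*} [NormedDivisionRing F] [ProperSpace F]
    [Finite ι] {a : ι → F} (ha : ∀ i, ‖a i‖ = 1) {V : Set F} (hV : V ∈ 𝓝 1) :
    ∃ N : ℕ, 0 < N ∧ ∀ i, a i ^ N ∈ V := by
  let u : ι → sphere (0 : F) 1 := fun i ↦ ⟨a i, by simpa using ha i⟩
  have hW : {w : ι → sphere (0 : F) 1 | ∀ i, (w i : F) ∈ V} ∈ 𝓝 1 := by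
    refine eventually_all.2 fun i ↦ ?_
    exact (continuous_subtype_val.comp (continuous_apply i)).continuousAt.preimage_mem_nhds hV
  have hfreq : ∃ᶠ n : ℕ in atTop, ∀ i, ((u ^ n) i : F) ∈ V :=
    (mapClusterPt_one_atTop_pow u).frequently hW
  obtain ⟨N, hmem, hN⟩ := (hfreq.and_eventually (eventually_gt_atTop 0)).exists
  exact ⟨N, hN, hmem⟩

theorem norm_inv_natCast_factorial_le (p : ℕ) [Fact p.Prime] (F : Type*) [NormedField F]
    [NormedAlgebra ℚ_[p] F] (n : ℕ) : ‖(n.factorial : F)⁻¹‖ ≤ (p : ℝ) ^ n := by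
  have hne : (n.factorial : ℚ_[p]) ≠ 0 := by exact_mod_cast n.factorial_ne_zero
  rw [norm_inv, ← map_natCast (algebraMap ℚ_[p] F), norm_algebraMap',
    Padic.norm_eq_zpow_neg_valuation hne, ← zpow_neg, neg_neg, Padic.valuation_natCast,
    zpow_natCast]
  exact pow_le_pow_right₀ (by exact_mod_cast (Fact.out : p.Prime).one_le)
    (padicValNat_factorial_le p n)

theorem expSeries_radius_pos (p : ℕ) [Fact p.Prime] (F : Type*) [NontriviallyNormedField F]
    [NormedAlgebra ℚ_[p] F] : 0 < (expSeries F F).radius := by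
  have hp : (p : NNReal) ≠ 0 := by exact_mod_cast (Fact.out : p.Prime).ne_zero
  have hnorm (n : ℕ) : ‖expSeries F F n‖ ≤ (p : ℝ) ^ n := by
    rw [expSeries, norm_smul, ContinuousMultilinearMap.norm_mkPiAlgebraFin, mul_one]
    exact norm_inv_natCast_factorial_le p F n
  have hbound (n : ℕ) : ‖expSeries F F n‖ * ((p : NNReal)⁻¹ : NNReal) ^ n ≤ 1 :=
    calc ‖expSeries F F n‖ * ((p : NNReal)⁻¹ : NNReal) ^ n
      _ ≤ (p : ℝ) ^ n * ((p : NNReal)⁻¹ : NNReal) ^ n := by gcongr; exact hnorm n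
      _ = 1 := by
        rw [NNReal.coe_inv, NNReal.coe_natCast, ← mul_pow, mul_inv_cancel₀ (by exact_mod_cast hp),
          one_pow]
  exact (ENNReal.coe_pos.2 (inv_pos.2 hp.bot_lt)).trans_le
    ((expSeries F F).le_radius_of_bound 1 hbound)

theorem exists_isSkolemModulus_of_analyticOnNhd (p : ℕ) [Fact p.Prime] {F E : Type*}
    [NontriviallyNormedField F] [NormedAlgebra ℚ_[p] F] [ProperSpace F] [NormedAddCommGroup E]
    [NormedSpace F E] {G : F → E} (hG : AnalyticOnNhd F G (closedBall 0 1)) :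
    ∃ M, IsSkolemModulus {n : ℤ | G n = 0} M := by
  have : CharZero F := charZero_of_injective_algebraMap (algebraMap ℚ_[p] F).injective
  have : IsUltrametricDist F := IsUltrametricDist.of_normedAlgebra ℚ_[p]
  obtain ⟨δ, hδ, hball⟩ :=
    exists_forall_ball_eq_zero_or_subsingleton (isCompact_closedBall (0 : F) 1) hG
  have hp : ‖(p : F)‖ < 1 := by
    rw [← map_natCast (algebraMap ℚ_[p] F), norm_algebraMap']
    exact Padic.norm_p_lt_one
  obtain ⟨k, hk⟩ := exists_pow_lt_of_lt_one hδ hp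
  refine ⟨(p : ℤ) ^ k, pow_pos (by exact_mod_cast (Fact.out : p.Prime).pos) k, fun r ↦ ?_⟩
  have hmem {n : ℤ} (hn : n ≡ r [ZMOD (p : ℤ) ^ k]) : (n : F) ∈ ball (r : F) δ := by
    obtain ⟨m, hm⟩ := hn.symm.dvd
    have hsub : (n : F) - r = p ^ k * m := by exact_mod_cast congrArg (Int.cast : ℤ → F) hm
    rw [mem_ball_iff_norm, hsub, norm_mul, norm_pow]
    exact (mul_le_of_le_one_right (by positivity)
      (IsUltrametricDist.norm_intCast_le_one F m)).trans_lt hk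
  refine (hball r (by simpa using IsUltrametricDist.norm_intCast_le_one F r)).imp
    (fun hzero n hn ↦ hzero n (hmem hn)) fun hsub ↦ Set.Subsingleton.finite ?_
  rintro m ⟨hm, hGm⟩ n ⟨hn, hGn⟩
  exact_mod_cast hsub ⟨hmem hm, hGm⟩ ⟨hmem hn, hGn⟩

theorem exists_isSkolemModulus_powerSumZeros_of_mem_image_exp
    (p : ℕ) [Fact p.Prime] {F ι : Type*} [NontriviallyNormedField F] [NormedAlgebra ℚ_[p] F]
    [ProperSpace F] [Fintype ι] (c : ι → F) {a : ι → F}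
    (ha : ∀ i, a i ∈ NormedSpace.exp '' eball (0 : F) (expSeries F F).radius) :
    ∃ M, IsSkolemModulus (powerSumZeros c a) M := by
  have : CharZero F := charZero_of_injective_algebraMap (algebraMap ℚ_[p] F).injective
  have : IsUltrametricDist F := IsUltrametricDist.of_normedAlgebra ℚ_[p]
  choose b hb hba using ha
  have hanalytic : AnalyticOnNhd F (fun z ↦ ∑ i, c i * NormedSpace.exp (z * b i))
      (closedBall 0 1) := by
    refine fun z hz ↦ Finset.univ.analyticAt_fun_sum fun i _ ↦ analyticAt_const.mul ?_
    have hmem := mul_mem_eball_zero (mem_closedBall_zero_iff.1 hz) (hb i)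
    exact (analyticAt_exp_of_mem_ball (𝕂 := F) _ hmem).comp_of_eq
      (analyticAt_id.mul analyticAt_const) rfl
  simpa only [powerSumZeros, exp_intCast_mul (hb _), hba] using
    exists_isSkolemModulus_of_analyticOnNhd p hanalytic

theorem exists_isSkolemModulus_powerSumZeros_of_norm_eq_one
    (p : ℕ) [Fact p.Prime] {F ι : Type*} [NontriviallyNormedField F] [NormedAlgebra ℚ_[p] F]
    [ProperSpace F] [Fintype ι] (c : ι → F) {a : ι → F} (ha : ∀ i, ‖a i‖ = 1) :
    ∃ M, IsSkolemModulus (powerSumZeros c a) M := by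
  have : CharZero F := charZero_of_injective_algebraMap (algebraMap ℚ_[p] F).injective
  obtain ⟨N, hN, hpow⟩ :=
    exists_pow_mem_of_norm_eq_one ha (image_exp_eball_mem_nhds_one (expSeries_radius_pos p F))
  have hne (i : ι) : a i ≠ 0 := norm_ne_zero_iff.1 (by simp [ha i])
  refine exists_isSkolemModulus_of_forall_residue (Int.natCast_pos.2 hN) fun m ↦ ?_
  rw [preimage_powerSumZeros c hne]
  exact exists_isSkolemModulus_powerSumZeros_of_mem_image_exp p _ (by simpa using hpow)

end PadicAnalysis

section PadicEmbedding

open Cardinal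

universe u

theorem continuum_le_mk_padicInt (p : ℕ) [Fact p.Prime] : 𝔠 ≤ #ℤ_[p] :=
  (continuum_le_cardinal_of_nontriviallyNormedField ℚ_[p]).trans
    (IsLocalization.cardinalMk_le (nonZeroDivisors ℤ_[p]))

theorem mk_le_max_of_isTranscendenceBasis {R A κ : Type u} [CommRing R] [Nontrivial R] [CommRing A]
    [IsDomain A] [Algebra R A] {s : κ → A} (hs : IsTranscendenceBasis R s) :
    #A ≤ max (max #R #κ) ℵ₀ := by
  have := hs.isAlgebraic
  calc #A ≤ max #(Algebra.adjoin R (range s)) ℵ₀ := Algebra.IsAlgebraic.cardinalMk_le_max _ _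
    _ = max #(MvPolynomial κ R) ℵ₀ := by rw [mk_congr hs.1.aevalEquiv.toEquiv]
    _ ≤ max (max #R #κ) ℵ₀ := max_le MvPolynomial.cardinalMk_le_max (le_max_right _ _)

open Polynomial in
theorem algebraicIndependent_affine {R A ι : Type*} [CommRing R] [NoZeroDivisors R] [CommRing A]
    [Algebra R A] {s : ι → A} (hs : AlgebraicIndependent R s) {m : R} (hm : m ≠ 0) (c : ι → R) :
    AlgebraicIndependent R fun i ↦ algebraMap R A m * s i + algebraMap R A (c i) := by
  have htrans (i : ι) : Transcendental R (C m * X + C (c i)) := by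
    refine Polynomial.transcendental _ ?_ ?_
    · rw [natDegree_linear hm]; exact one_ne_zero
    · rw [leadingCoeff_linear hm]; exact mem_nonZeroDivisors_of_ne_zero hm
  simpa using hs.polynomial_aeval_of_transcendental htrans

theorem exists_algebraicIndependent_padicInt_toZMod_eq (p : ℕ) [Fact p.Prime] {ι : Type*}
    (hι : #ι ≤ 𝔠) (c : ι → ZMod p) :
    ∃ τ : ι → ℤ_[p], AlgebraicIndependent ℤ τ ∧ ∀ i, PadicInt.toZMod (τ i) = c i := by
  obtain ⟨κ, s, hs⟩ := exists_isTranscendenceBasis' ℤ ℤ_[p]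
  have hκ : 𝔠 ≤ #κ := by
    have h := (continuum_le_mk_padicInt p).trans (mk_le_max_of_isTranscendenceBasis hs)
    simpa [aleph0_lt_continuum.not_ge] using h
  obtain ⟨e⟩ : Nonempty (ι ↪ κ) := by
    rw [← lift_mk_le']
    exact (lift_le_continuum.2 hι).trans (continuum_le_lift.2 hκ)
  have hp : (p : ℤ) ≠ 0 := by exact_mod_cast (Fact.out : p.Prime).ne_zero
  refine ⟨_, algebraicIndependent_affine (hs.1.comp e e.injective) hp fun i ↦ (c i).cast,
    fun i ↦ ?_⟩
  simp

open MvPolynomial in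
theorem exists_prime_aeval_zmod_ne_zero {ι : Type*} {P : MvPolynomial ι ℤ} (hP : P ≠ 0) :
    ∃ p : ℕ, p.Prime ∧ ∃ c : ι → ZMod p, aeval c P ≠ 0 := by
  obtain ⟨c, hc⟩ : ∃ c : ι → ℤ, eval c P ≠ 0 := by
    by_contra! h
    exact hP (MvPolynomial.funext (by simpa using h))
  obtain ⟨p, hlt, hp⟩ := Nat.exists_infinite_primes ((eval c P).natAbs + 1)
  refine ⟨p, hp, fun i ↦ c i, ?_⟩
  have hcast : aeval (fun i ↦ (c i : ZMod p)) P = ((eval c P : ℤ) : ZMod p) := by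
    simpa [aeval_def] using! (eval₂_comp_left (Int.castRingHom (ZMod p)) (RingHom.id ℤ) c P).symm
  rw [hcast, Ne, ZMod.intCast_zmod_eq_zero_iff_dvd]
  exact fun hdvd ↦ hlt.not_gt <| Nat.lt_succ_of_le <|
    Nat.le_of_dvd (Int.natAbs_pos.2 hc) (Int.natCast_dvd.1 hdvd)

open MvPolynomial in
theorem exists_algebraicIndependent_padicInt_isUnit_aeval {ι : Type*} (hι : #ι ≤ 𝔠)
    {P : MvPolynomial ι ℤ} (hP : P ≠ 0) :
    ∃ (p : ℕ) (_ : Fact p.Prime) (τ : ι → ℤ_[p]),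
      AlgebraicIndependent ℤ τ ∧ IsUnit (aeval τ P) := by
  obtain ⟨p, hp, c, hc⟩ := exists_prime_aeval_zmod_ne_zero hP
  have : Fact p.Prime := ⟨hp⟩
  obtain ⟨τ, hτ, hτc⟩ := exists_algebraicIndependent_padicInt_toZMod_eq p hι c
  refine ⟨p, this, τ, hτ, ?_⟩
  have hreduce : PadicInt.toZMod (aeval τ P) = aeval c P := by
    rw [← funext hτc]
    exact (comp_aeval_apply τ (PadicInt.toZMod.toIntAlgHom) P)
  by_contra hunit
  rw [← mem_nonunits_iff, ← IsLocalRing.mem_maximalIdeal, ← PadicInt.ker_toZMod,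
    RingHom.mem_ker, hreduce] at hunit
  exact hc hunit

theorem exists_ringHom_comp_algebraMap_eq {R K L : Type*} [CommRing R] [Field K] [Field L]
    [IsAlgClosed L] [Algebra R K] [FaithfulSMul R K] [Algebra.IsAlgebraic R K] {ψ : R →+* L}
    (hψ : Function.Injective ψ) : ∃ φ : K →+* L, φ.comp (algebraMap R K) = ψ := by
  have : IsDomain R := hψ.isDomain
  let _ : Algebra R L := ψ.toAlgebra
  have : FaithfulSMul R L := (faithfulSMul_iff_algebraMap_injective R L).2 hψ
  exact ⟨IsAlgClosed.lift (R := R) (S := K) (M := L), AlgHom.comp_algebraMap _⟩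

open Polynomial in
theorem isIntegral_of_isUnit_leadingCoeff {A B : Type*} [CommRing A] [Ring B] [Algebra A B]
    {P : A[X]} (hP : IsUnit P.leadingCoeff) {x : B} (hx : aeval x P = 0) : IsIntegral A x :=
  ⟨_, monic_of_isUnit_leadingCoeff_inv_smul hP, by
    rw [← aeval_def, Units.smul_def, map_smul, hx, smul_zero]⟩

theorem norm_le_one_of_isIntegral {A L : Type*} [CommRing A] [NormedField L]
    [IsUltrametricDist L] [Algebra A L] (hA : ∀ r, ‖algebraMap A L r‖ ≤ 1) {x : L}
    (hx : IsIntegral A x) : ‖x‖ ≤ 1 := by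
  obtain ⟨P, hP, hPx⟩ := hx
  let v : Valuation L NNReal := NormedField.valuation
  let toInteger : A →+* v.integer := (algebraMap A L).codRestrict v.integer hA
  exact (Valuation.integer.integers v).mem_of_integral
    ⟨P.map toInteger, hP.map toInteger, by rwa [Polynomial.eval₂_map]⟩

open Polynomial in
theorem exists_padicAlgCl_ringHom_norm_le_one {K : Type*} [Field K] [CharZero K] (hK : #K ≤ 𝔠)
    (S : Finset K) :
    ∃ (p : ℕ) (_ : Fact p.Prime) (φ : K →+* PadicAlgCl p), ∀ a ∈ S, ‖φ a‖ ≤ 1 := by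
  obtain ⟨ι, x, hx⟩ := exists_isTranscendenceBasis' ℤ K
  have := hx.isAlgebraic
  let R := Algebra.adjoin ℤ (range x)
  choose Q hQ hQroot using fun a : K ↦ (hx.isAlgebraic.isAlgebraic a : IsAlgebraic R a)
  let e : MvPolynomial ι ℤ ≃ₐ[ℤ] R := hx.1.aevalEquiv
  have hlead : e.symm (∏ a ∈ S, (Q a).leadingCoeff) ≠ 0 := by
    simpa [Finset.prod_eq_zero_iff] using fun a _ ↦ hQ a
  obtain ⟨p, hp, τ, hτ, hunit⟩ := exists_algebraicIndependent_padicInt_isUnit_aeval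
    ((mk_le_of_injective hx.1.injective).trans hK) hlead
  let ψ : R →+* ℤ_[p] := (MvPolynomial.aeval τ).toRingHom.comp e.symm.toRingHom
  have hψ : Function.Injective ψ :=
    (algebraicIndependent_iff_injective_aeval.1 hτ).comp e.symm.injective
  have hinj : Function.Injective (algebraMap ℤ_[p] (PadicAlgCl p)) :=
    (algebraMap ℚ_[p] (PadicAlgCl p)).injective.comp Subtype.val_injective
  have hle (r : ℤ_[p]) : ‖algebraMap ℤ_[p] (PadicAlgCl p) r‖ ≤ 1 :=
    (PadicAlgCl.norm_extends p r).trans_le r.norm_le_one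
  obtain ⟨φ, hφ⟩ := exists_ringHom_comp_algebraMap_eq (K := K)
    (ψ := (algebraMap ℤ_[p] (PadicAlgCl p)).comp ψ) (hinj.comp hψ)
  refine ⟨p, hp, φ, fun a ha ↦ norm_le_one_of_isIntegral (A := ℤ_[p]) hle ?_⟩
  refine isIntegral_of_isUnit_leadingCoeff (P := (Q a).map ψ) ?_ ?_
  · rw [leadingCoeff_map_of_injective hψ]
    have hdvd : (Q a).leadingCoeff ∣ ∏ a ∈ S, (Q a).leadingCoeff := Finset.dvd_prod_of_mem _ ha
    exact isUnit_of_dvd_unit (map_dvd ψ hdvd) hunit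
  · rw [aeval_def, eval₂_map, ← hφ, ← hom_eval₂, ← aeval_def, hQroot, map_zero]

end PadicEmbedding

section CharZero

open Cardinal

variable {K ι : Type*} [Field K] [CharZero K] [Fintype ι]

theorem exists_isSkolemModulus_powerSumZeros_of_mk_le_continuum (hK : #K ≤ 𝔠) (c : ι → K)
    {a : ι → K} (ha : ∀ i, a i ≠ 0) : ∃ M, IsSkolemModulus (powerSumZeros c a) M := by
  classical
  obtain ⟨p, _, φ, hφ⟩ := exists_padicAlgCl_ringHom_norm_le_one hK
    (Finset.univ.image a ∪ Finset.univ.image a⁻¹)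
  have hnorm (i : ι) : ‖φ (a i)‖ = 1 := by
    have hle : ‖φ (a i)‖ ≤ 1 := hφ _ (by simp)
    have hinv : ‖φ (a i)‖⁻¹ ≤ 1 := by simpa using hφ (a i)⁻¹ (by simp)
    exact hle.antisymm ((inv_le_one₀ (norm_pos_iff.2 ((map_ne_zero φ).2 (ha i)))).1 hinv)
  let S : Set (PadicAlgCl p) := range (φ ∘ c) ∪ range (φ ∘ a)
  have : Finite S := ((finite_range _).union (finite_range _)).to_subtype
  let F := IntermediateField.adjoin ℚ_[p] S
  have : FiniteDimensional ℚ_[p] F :=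
    IntermediateField.finiteDimensional_adjoin fun x _ ↦ Algebra.IsIntegral.isIntegral x
  have : ProperSpace F := FiniteDimensional.proper ℚ_[p] F
  let c' (i : ι) : F := ⟨φ (c i), IntermediateField.subset_adjoin _ _ (.inl ⟨i, rfl⟩)⟩
  let a' (i : ι) : F := ⟨φ (a i), IntermediateField.subset_adjoin _ _ (.inr ⟨i, rfl⟩)⟩
  have hzeros : powerSumZeros c' a' = powerSumZeros c a :=
    (powerSumZeros_map F.val.toRingHom c' a').symm.trans (powerSumZeros_map φ c a)
  rw [← hzeros]
  exact exists_isSkolemModulus_powerSumZeros_of_norm_eq_one p c' hnorm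

theorem exists_isSkolemModulus_powerSumZeros (c : ι → K) {a : ι → K} (ha : ∀ i, a i ≠ 0) :
    ∃ M, IsSkolemModulus (powerSumZeros c a) M := by
  let S : Set K := range c ∪ range a
  let K₀ := Subfield.closure S
  have hS : #S ≤ ℵ₀ := ((countable_range c).union (countable_range a)).le_aleph0
  have hK₀ : #K₀ ≤ 𝔠 :=
    (Subfield.cardinalMk_closure_le_max S).trans (max_le hS le_rfl) |>.trans aleph0_le_continuum
  let c' (i : ι) : K₀ := ⟨c i, Subfield.subset_closure (.inl ⟨i, rfl⟩)⟩
  let a' (i : ι) : K₀ := ⟨a i, Subfield.subset_closure (.inr ⟨i, rfl⟩)⟩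
  have hzeros : powerSumZeros c a = powerSumZeros c' a' := powerSumZeros_map K₀.subtype c' a'
  rw [hzeros]
  exact exists_isSkolemModulus_powerSumZeros_of_mk_le_continuum hK₀ c'
    fun i ↦ Subtype.coe_ne_coe.1 (ha i)

theorem skolem_mahler_lech_general (c : ι → K) {a : ι → K} (ha : ∀ i, a i ≠ 0)
    (hinf : {n : ℤ | ∑ i, c i * a i ^ n = 0}.Infinite) :
    ∃ Δ : ℤ, 0 < Δ ∧ ∃ D : Finset ℤ, D.Nonempty ∧ (∀ d ∈ D, 0 ≤ d ∧ d < Δ) ∧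
      (∀ n : ℤ, (∃ d ∈ D, n ≡ d [ZMOD Δ]) → ∑ i, c i * a i ^ n = 0) ∧
      {n : ℤ | ∑ i, c i * a i ^ n = 0 ∧ ∀ d ∈ D, ¬ n ≡ d [ZMOD Δ]}.Finite := by
  obtain ⟨Δ, hΔ⟩ := exists_isSkolemModulus_powerSumZeros c ha
  exact ⟨Δ, hΔ.1, hΔ.exists_residues hinf⟩

end CharZero

theorem IsExpPoly.exists_forall_intCast_eq_sum {f : ℂ → ℂ} (hf : IsExpPoly f) :
    ∃ (N : ℕ) (c a : Fin N → ℂ), (∀ i, a i ≠ 0) ∧ ∀ n : ℤ, f n = ∑ i, c i * a i ^ n := by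
  obtain ⟨N, lam, mu, hf⟩ := hf
  refine ⟨N, lam, fun i ↦ exp (mu i), fun i ↦ exp_ne_zero (mu i), fun n ↦ ?_⟩
  simp only [hf, mul_comm (mu _), exp_int_mul]

/-- **Skolem–Mahler–Lech theorem for exponential polynomials.** -/
theorem skolem_mahler_lech (f : ℂ → ℂ) (hf : IsExpPoly f)
    (hinf : {n : ℤ | f (n : ℂ) = 0}.Infinite) :
    ∃ Δ : ℤ, 0 < Δ ∧ ∃ D : Finset ℤ, D.Nonempty ∧ (∀ d ∈ D, 0 ≤ d ∧ d < Δ) ∧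
      (∀ n : ℤ, (∃ d ∈ D, n ≡ d [ZMOD Δ]) → f (n : ℂ) = 0) ∧
      {n : ℤ | f (n : ℂ) = 0 ∧ ∀ d ∈ D, ¬ n ≡ d [ZMOD Δ]}.Finite := by
  obtain ⟨N, c, a, ha, hfn⟩ := hf.exists_forall_intCast_eq_sum
  simp only [hfn] at hinf ⊢
  exact skolem_mahler_lech_general c ha hinf
end
end

section
/- A function f ∈ 𝓔 is a unit of the ring 𝓔 (i.e. has a multiplicative inverse in 𝓔) if and only if there exist c, α ∈ ℂ with c ≠ 0 such that f(z) = c·e^{αz} for all z ∈ ℂ. -/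
open Complex Set

noncomputable section

/-!
By Dedekind's independence of characters, the functions `z ↦ e^{μz}` are linearly independent, so
`𝓔` is isomorphic to the group algebra of `(ℂ, +)` over `ℂ`. As `ℂ` is a vector space over `ℚ`,
any two finite nonempty sets of exponents, not both singletons, have two sums that are attained
only once. The corresponding terms survive in the product, so a product of two elements of the
group algebra can be a monomial only if both factors are.
-/

section Monomials

variable {R A : Type*} [Semiring R] [NoZeroDivisors R] [Add A] {x y : AddMonoidAlgebra R A}

theorem add_mem_support_mul_of_uniqueAdd {a b : A} (ha : a ∈ x.coeff.support)
    (hb : b ∈ y.coeff.support) (hab : UniqueAdd x.coeff.support y.coeff.support a b) :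
    a + b ∈ (x * y).coeff.support := by
  rw [Finsupp.mem_support_iff] at ha hb ⊢
  rw [AddMonoidAlgebra.coeff_mul_add_of_uniqueAdd hab]
  exact mul_ne_zero ha hb

variable [TwoUniqueSums A]

theorem one_lt_card_support_mul (h : 1 < x.coeff.support.card * y.coeff.support.card) :
    1 < (x * y).coeff.support.card := by
  obtain ⟨p, hp, q, hq, hpq, p_unique, q_unique⟩ := TwoUniqueSums.uniqueAdd_of_one_lt_card h
  rw [Finset.mem_product] at hp hq
  refine Finset.one_lt_card.mpr ⟨p.1 + p.2, add_mem_support_mul_of_uniqueAdd hp.1 hp.2 p_unique,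
    q.1 + q.2, add_mem_support_mul_of_uniqueAdd hq.1 hq.2 q_unique, fun sum_eq ↦ hpq ?_⟩
  obtain ⟨fst_eq, snd_eq⟩ := p_unique hq.1 hq.2 sum_eq.symm
  exact Prod.ext fst_eq.symm snd_eq.symm

theorem exists_eq_single_of_mul_eq_single {a : A} {r : R} (hr : r ≠ 0)
    (hxy : x * y = AddMonoidAlgebra.single a r) :
    ∃ b s, s ≠ 0 ∧ x = AddMonoidAlgebra.single b s := by
  have hxy₀ : x * y ≠ 0 := by rwa [hxy, Ne, AddMonoidAlgebra.single_eq_zero]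
  have card_pos {w : AddMonoidAlgebra R A} (hw : w ≠ 0) : 0 < w.coeff.support.card := by
    rwa [Finset.card_pos, Finsupp.support_nonempty_iff, Ne, AddMonoidAlgebra.coeff_eq_zero]
  have hx : 0 < x.coeff.support.card := card_pos (left_ne_zero_of_mul hxy₀)
  have hy : 0 < y.coeff.support.card := card_pos (right_ne_zero_of_mul hxy₀)
  have card_mul_le : x.coeff.support.card * y.coeff.support.card ≤ 1 := by
    refine not_lt.mp fun h ↦ (one_lt_card_support_mul h).not_ge ?_
    rw [hxy, AddMonoidAlgebra.coeff_single]
    exact Finset.card_le_card Finsupp.support_single_subset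
  have card_eq : x.coeff.support.card = 1 :=
    le_antisymm ((Nat.le_mul_of_pos_right _ hy).trans card_mul_le) hx
  obtain ⟨b, s, hs, coeff_eq⟩ := Finsupp.card_support_eq_one'.mp card_eq
  exact ⟨b, s, hs, AddMonoidAlgebra.coeff_injective coeff_eq⟩

end Monomials

theorem linearIndependent_addChar (A : Type*) [AddMonoid A] (L : Type*) [CommRing L]
    [IsDomain L] : LinearIndependent L ((⇑) : AddChar A L → A → L) :=
  (linearIndependent_monoidHom (Multiplicative A) L).comp AddChar.toMonoidHomEquiv
    AddChar.toMonoidHomEquiv.injective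

section CharacterSums

variable {R L : Type*} [Ring R] [CommSemiring L]

/-- The homomorphism from the group algebra of `(R, +)` to functions on `R` that sends the basis
element at `a` to the character `z ↦ ψ (a * z)`. For `ψ` the complex exponential, its range is the
ring of exponential polynomials. -/
def characterSum (ψ : AddChar R L) : AddMonoidAlgebra L R →ₐ[L] (R → L) :=
  AddMonoidAlgebra.lift L (R → L) R
    { toFun a := ψ.mulShift a.toAdd
      map_one' := by simp
      map_mul' a b := by simp [← AddChar.mulShift_mul] }

theorem characterSum_single (ψ : AddChar R L) (a : R) (c : L) :
    characterSum ψ (AddMonoidAlgebra.single a c) = fun z ↦ c * ψ (a * z) :=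
  AddMonoidAlgebra.lift_single _ _ _

theorem characterSum_apply (ψ : AddChar R L) (x : AddMonoidAlgebra L R) :
    characterSum ψ x = Finsupp.linearCombination L (fun a ↦ ⇑(ψ.mulShift a)) x.coeff :=
  AddMonoidAlgebra.lift_apply _ _

end CharacterSums

theorem characterSum_injective {R L : Type*} [CommRing R] [CommRing L] [IsDomain L]
    {ψ : AddChar R L} (hψ : ψ.IsPrimitive) : Function.Injective (characterSum ψ) := by
  have shifts_independent : LinearIndependent L fun a ↦ ⇑(ψ.mulShift a) :=
    (linearIndependent_addChar R L).comp ψ.mulShift (AddChar.to_mulShift_inj_of_isPrimitive hψ)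
  intro x y hxy
  rw [characterSum_apply, characterSum_apply] at hxy
  exact AddMonoidAlgebra.coeff_injective (shifts_independent hxy)

/-- The complex exponential as a character of `(ℂ, +)`. -/
def expAddChar : AddChar ℂ ℂ := AddChar.toMonoidHomEquiv.symm Complex.expMonoidHom

theorem expAddChar_apply (z : ℂ) : expAddChar z = Complex.exp z := rfl

theorem expAddChar_isPrimitive : expAddChar.IsPrimitive := by
  refine AddChar.IsPrimitive.of_ne_one (AddChar.ne_one_iff.mpr ⟨Real.pi * I, ?_⟩)
  rw [expAddChar_apply, Complex.exp_pi_mul_I]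
  norm_num

theorem IsExpPoly.exists_characterSum_eq {f : ℂ → ℂ} (hf : IsExpPoly f) :
    ∃ x, characterSum expAddChar x = f := by
  obtain ⟨N, lam, mu, hf⟩ := hf
  refine ⟨∑ i, AddMonoidAlgebra.single (mu i) (lam i), funext fun z ↦ ?_⟩
  simp only [map_sum, characterSum_single, expAddChar_apply, Finset.sum_apply, hf]

theorem isExpPoly_const_mul_exp (c α : ℂ) : IsExpPoly fun z ↦ c * Complex.exp (α * z) :=
  ⟨1, fun _ ↦ c, fun _ ↦ α, by simp⟩

theorem const_mul_exp_mul_inv_mul_exp_neg {c : ℂ} (hc : c ≠ 0) (α z : ℂ) :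
    c * Complex.exp (α * z) * (c⁻¹ * Complex.exp (-α * z)) = 1 := by
  rw [mul_mul_mul_comm, mul_inv_cancel₀ hc, ← Complex.exp_add, neg_mul, add_neg_cancel,
    Complex.exp_zero, one_mul]

/-- The units of `𝓔` are exactly the functions `z ↦ c·e^{αz}` with `c ≠ 0`. -/
theorem unit_iff_exp (f : ℂ → ℂ) (hf : IsExpPoly f) :
    (∃ g : ℂ → ℂ, IsExpPoly g ∧ f * g = 1) ↔
      ∃ c α : ℂ, c ≠ 0 ∧ ∀ z : ℂ, f z = c * Complex.exp (α * z) := by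
  constructor
  · rintro ⟨g, hg, hfg⟩
    obtain ⟨x, rfl⟩ := hf.exists_characterSum_eq
    obtain ⟨y, rfl⟩ := hg.exists_characterSum_eq
    have hxy : x * y = 1 :=
      characterSum_injective expAddChar_isPrimitive (by rw [map_mul, hfg, map_one])
    obtain ⟨α, c, hc, rfl⟩ := exists_eq_single_of_mul_eq_single one_ne_zero hxy
    exact ⟨c, α, hc, congrFun (characterSum_single expAddChar α c)⟩
  · rintro ⟨c, α, hc, hf_eq⟩
    refine ⟨fun z ↦ c⁻¹ * Complex.exp (-α * z), isExpPoly_const_mul_exp _ _, funext fun z ↦ ?_⟩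
    rw [Pi.mul_apply, hf_eq]
    exact const_mul_exp_mul_inv_mul_exp_neg hc α z
end
end

section
/- Let f and g be nonzero exponential polynomials in 𝓔. If g divides f in the ring 𝓔, then there exist units a and b of 𝓔 such that supp(a·g) is contained in supp(b·f), i.e. every element of supp(a·g) is a ℚ-linear combination of elements of supp(b·f). -/
open Complex Set

noncomputable section

/-!
The functions in `𝓔` are the evaluations of elements of the group algebra `ℂ[ℂ]`, the monomial at
`m` being `z ↦ exp (m * z)`. Let `V` be the `ℚ`-span of the exponents of a product `F * G`. Then
`F * G` is homogeneous of degree `0` for the grading of `ℂ[ℂ]` by the `ℚ`-vector space `ℂ ⧸ V`.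
Any two nonempty finite subsets of a `ℚ`-vector space, not both singletons, have two sums attained
exactly once, so a product of nonzero elements, one of them inhomogeneous, has nonzero components
in two degrees. Hence `F` is homogeneous: its exponents differ by elements of `V`, and dividing `F`
by one of its monomials moves them all into `V`.
-/

section GroupAlgebra

open Finset
open scoped AddMonoidAlgebra

variable {R A B : Type*} [Semiring R]

theorem support_coeff_nonempty_of_ne_zero {F : R[A]} (hF : F ≠ 0) : F.coeff.support.Nonempty :=
  Finsupp.support_nonempty_iff.2 (AddMonoidAlgebra.coeff_eq_zero.not.2 hF)

variable [NoZeroDivisors R]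

section Add

variable [Add A] [UniqueSums A] [Add B] [DecidableEq B] {F G : R[A]}

theorem add_mem_image_support_coeff_mul_of_uniqueAdd (φ : A →ₙ+ B) {s t : B}
    (hs : s ∈ F.coeff.support.image φ) (ht : t ∈ G.coeff.support.image φ)
    (h_unique : UniqueAdd (F.coeff.support.image φ) (G.coeff.support.image φ) s t) :
    s + t ∈ (F * G).coeff.support.image φ := by
  obtain ⟨a, ha, b, hb, h_unique_fiber⟩ := UniqueSums.uniqueAdd_of_nonempty
    (fiber_nonempty_iff_mem_image.2 hs) (fiber_nonempty_iff_mem_image.2 ht)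
  obtain ⟨haF, rfl⟩ := mem_filter.1 ha
  obtain ⟨hbG, rfl⟩ := mem_filter.1 hb
  have h_unique_support : UniqueAdd F.coeff.support G.coeff.support a b :=
    .of_image_filter φ rfl rfl h_unique h_unique_fiber
  refine mem_image.2 ⟨a + b, ?_, map_add φ a b⟩
  rw [Finsupp.mem_support_iff, AddMonoidAlgebra.coeff_mul_add_of_uniqueAdd h_unique_support]
  exact mul_ne_zero (Finsupp.mem_support_iff.1 haF) (Finsupp.mem_support_iff.1 hbG)

theorem card_image_support_coeff_le_one_of_mul [TwoUniqueSums B] (φ : A →ₙ+ B) (hG : G ≠ 0)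
    (hFG : #((F * G).coeff.support.image φ) ≤ 1) : #(F.coeff.support.image φ) ≤ 1 := by
  by_contra! hF
  have hG_pos : 0 < #(G.coeff.support.image φ) :=
    card_pos.2 ((support_coeff_nonempty_of_ne_zero hG).image φ)
  obtain ⟨p, hp, q, hq, hpq, hp_unique, hq_unique⟩ :=
    TwoUniqueSums.uniqueAdd_of_one_lt_card (one_lt_mul_of_lt_of_le hF hG_pos)
  rw [mem_product] at hp hq
  have h_sum : p.1 + p.2 = q.1 + q.2 := card_le_one.1 hFG
    _ (add_mem_image_support_coeff_mul_of_uniqueAdd φ hp.1 hp.2 hp_unique)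
    _ (add_mem_image_support_coeff_mul_of_uniqueAdd φ hq.1 hq.2 hq_unique)
  exact hpq (Prod.ext_iff.2 (hq_unique hp.1 hp.2 h_sum))

end Add

variable [AddCommGroup A] [Module ℚ A] {F G : R[A]}

theorem sub_mem_span_support_coeff_mul (hG : G ≠ 0) {x y : A}
    (hx : x ∈ F.coeff.support) (hy : y ∈ F.coeff.support) :
    x - y ∈ Submodule.span ℚ ((F * G).coeff.support : Set A) := by
  classical
  set V := Submodule.span ℚ ((F * G).coeff.support : Set A)
  let π : A →ₙ+ A ⧸ V := (V.mkQ : A →+ A ⧸ V)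
  have hFG : ∀ c ∈ (F * G).coeff.support.image π, c = 0 :=
    forall_mem_image.2 fun z hz ↦ (Submodule.Quotient.mk_eq_zero V).2 (Submodule.subset_span hz)
  have hF : #(F.coeff.support.image π) ≤ 1 := card_image_support_coeff_le_one_of_mul π hG
    (card_le_one.2 fun c hc d hd ↦ (hFG c hc).trans (hFG d hd).symm)
  exact (Submodule.Quotient.eq V).1
    (card_le_one.1 hF _ (mem_image_of_mem π hx) _ (mem_image_of_mem π hy))

theorem span_support_coeff_single_neg_mul_le (hG : G ≠ 0) {m : A} (hm : m ∈ F.coeff.support)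
    (r : R) :
    Submodule.span ℚ ((AddMonoidAlgebra.single (-m) r * F).coeff.support : Set A) ≤
      Submodule.span ℚ ((F * G).coeff.support : Set A) := by
  classical
  refine Submodule.span_le.2 fun x hx ↦ ?_
  obtain ⟨y, hy, rfl⟩ :=
    mem_image.1 (AddMonoidAlgebra.support_coeff_single_mul_subset F r (-m) hx)
  simpa only [neg_add_eq_sub, SetLike.mem_coe] using sub_mem_span_support_coeff_mul hG hy hm

end GroupAlgebra

section ExpEval

open scoped AddMonoidAlgebra

/-- The evaluation homomorphism from the group algebra of `(ℂ, +)` onto the ring `𝓔`, sending the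
monomial at `m` to `z ↦ exp (m * z)`. -/
def expEval : ℂ[ℂ] →ₐ[ℂ] (ℂ → ℂ) :=
  AddMonoidAlgebra.lift ℂ (ℂ → ℂ) ℂ
    { toFun := fun m z ↦ exp (m.toAdd * z)
      map_one' := by ext z; simp
      map_mul' := fun m n ↦ by ext z; simp [add_mul, exp_add] }

theorem expEval_single_apply (m c z : ℂ) :
    expEval (AddMonoidAlgebra.single m c) z = c * exp (m * z) := by
  simp [expEval]

theorem expEval_apply (F : ℂ[ℂ]) (z : ℂ) :
    expEval F z = ∑ m ∈ F.coeff.support, F.coeff m * exp (m * z) := by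
  simp [expEval, AddMonoidAlgebra.lift_apply, Finsupp.sum]

theorem exists_isCanonicalRep_expEval (F : ℂ[ℂ]) :
    ∃ (N : ℕ) (lam mu : Fin N → ℂ),
      IsCanonicalRep (expEval F) lam mu ∧ Set.range mu = F.coeff.support := by
  let e : Fin F.coeff.support.card ≃ F.coeff.support := F.coeff.support.equivFin.symm
  refine ⟨_, fun i ↦ F.coeff (e i), fun i ↦ e i,
    ⟨fun i ↦ Finsupp.mem_support_iff.1 (e i).2, Subtype.val_injective.comp e.injective,
      fun z ↦ ?_⟩, ?_⟩
  · rw [expEval_apply, e.sum_comp fun m ↦ F.coeff m * exp (m * z),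
      Finset.sum_coe_sort F.coeff.support fun m ↦ F.coeff m * exp (m * z)]
  · exact (e.surjective.range_comp Subtype.val).trans Subtype.range_coe

theorem isExpPoly_iff_exists_expEval_eq {f : ℂ → ℂ} : IsExpPoly f ↔ ∃ F, expEval F = f := by
  constructor
  · rintro ⟨N, lam, mu, hf⟩
    refine ⟨∑ i, AddMonoidAlgebra.single (mu i) (lam i), funext fun z ↦ ?_⟩
    simp only [hf, map_sum, Finset.sum_apply, expEval_single_apply]
  · rintro ⟨F, rfl⟩
    obtain ⟨N, lam, mu, ⟨-, -, h_sum⟩, -⟩ := exists_isCanonicalRep_expEval F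
    exact ⟨N, lam, mu, h_sum⟩

theorem eUnit_expEval_of_isUnit {F : ℂ[ℂ]} (hF : IsUnit F) : EUnit (expEval F) := by
  obtain ⟨G, hFG⟩ := hF.exists_right_inv
  refine ⟨isExpPoly_iff_exists_expEval_eq.2 ⟨F, rfl⟩, expEval G,
    isExpPoly_iff_exists_expEval_eq.2 ⟨G, rfl⟩, ?_⟩
  rw [← map_mul, hFG, map_one]

end ExpEval

/-- If `g` divides `f` in `𝓔` (both nonzero), then for some units `a, b` of `𝓔` the support
of `a·g` is contained in the support of `b·f`. -/
theorem supp_le_of_dvd (f g : ℂ → ℂ) (hf : IsExpPoly f) (hg : IsExpPoly g)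
    (hf0 : f ≠ 0) (hg0 : g ≠ 0) (hdvd : EDvd g f) :
    ∃ a b : ℂ → ℂ, EUnit a ∧ EUnit b ∧
      ∃ (M N : ℕ) (l : Fin M → ℂ) (em : Fin M → ℂ) (lam : Fin N → ℂ) (mu : Fin N → ℂ),
        IsCanonicalRep (a * g) l em ∧ IsCanonicalRep (b * f) lam mu ∧
        Submodule.span ℚ (Set.range em) ≤ Submodule.span ℚ (Set.range mu) := by
  obtain ⟨q, hq, rfl⟩ := hdvd
  obtain ⟨G, rfl⟩ := isExpPoly_iff_exists_expEval_eq.1 hg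
  obtain ⟨Q, rfl⟩ := isExpPoly_iff_exists_expEval_eq.1 hq
  have hG : G ≠ 0 := ne_zero_of_map hg0
  have hQ : Q ≠ 0 := ne_zero_of_map (right_ne_zero_of_mul hf0)
  obtain ⟨m, hm⟩ := support_coeff_nonempty_of_ne_zero hG
  have h_unit : IsUnit (AddMonoidAlgebra.single (-m) (1 : ℂ)) :=
    (Group.isUnit (Multiplicative.ofAdd (-m))).map (AddMonoidAlgebra.of ℂ ℂ)
  obtain ⟨M, l, em, h_rep_g, h_range_em⟩ :=
    exists_isCanonicalRep_expEval (AddMonoidAlgebra.single (-m) 1 * G)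
  obtain ⟨N, lam, mu, h_rep_f, h_range_mu⟩ := exists_isCanonicalRep_expEval (G * Q)
  refine ⟨expEval (AddMonoidAlgebra.single (-m) 1), expEval 1, eUnit_expEval_of_isUnit h_unit,
    eUnit_expEval_of_isUnit isUnit_one, M, N, l, em, lam, mu, ?_, ?_, ?_⟩
  · rwa [← map_mul]
  · rwa [← map_mul, ← map_mul, one_mul]
  · rw [h_range_em, h_range_mu]
    exact span_support_coeff_single_neg_mul_le hQ hm 1
end
end

section
/- Assume Schanuel's Conjecture. In the setup described, the transcendence degree over ℚ of the set {b_i·s : 1 ≤ i ≤ D, s ∈ S} is at most δ₁ + 2δ₂. -/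
open Complex Set

noncomputable section

/-!
Write `D` for the number of the `b_j`. Up to a unit, `f` and `g` are polynomials over the field
`ℚ(λ, l)` in the coordinates of the point `(e^{b_j z})_j`, and dividing these polynomials by their
greatest common divisor, which becomes a unit of `𝓔`, makes them coprime. Hence at a common
zero `s` the point `(e^{b_j s})_j` has transcendence degree at most `D - 2` over `ℚ(λ, l)`.

Let `s₁, …, s_n ∈ S` be algebraically independent over `ℚ(b)`. Then the `D n` products `b_j s_k` are
linearly independent over `ℚ`, and Schanuel's conjecture yields `D n ≤ (δ₂ + n) + (δ₁ + (D - 2) n)`,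
that is, `n ≤ δ₁ + δ₂`. So `S` has transcendence degree at most `δ₁ + δ₂` over `ℚ(b)`, and adding
the transcendence degree `δ₂` of `b` gives the bound.

Transcendence degrees are ranks in the matroid of algebraic independence.
-/

open AlgebraicIndependent (matroid matroid_closure_eq)
open IntermediateField (adjoin)
open MvPolynomial (aeval)

section MatroidRank

variable {α ι : Type*} (M : Matroid α)

lemma eRk_le_eRk_of_subset_closure {X Y : Set α} (h : X ⊆ M.closure Y) : M.eRk X ≤ M.eRk Y :=
  (M.eRk_mono h).trans_eq (M.eRk_closure_eq Y)

lemma eRk_biUnion_le (s : Finset ι) (X : ι → Set α) :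
    M.eRk (⋃ i ∈ s, X i) ≤ ∑ i ∈ s, M.eRk (X i) := by
  classical
  induction s using Finset.induction_on with
  | empty => simp
  | insert i s hi ih =>
    rw [Finset.set_biUnion_insert, Finset.sum_insert hi]
    exact (M.eRk_union_le_eRk_add_eRk _ _).trans (by gcongr)

lemma eRk_le_of_forall_finset {X : Set α} {n : ℕ∞}
    (h : ∀ t : Finset α, (t : Set α) ⊆ X → M.Indep t → (t.card : ℕ∞) ≤ n) : M.eRk X ≤ n := by
  refine ENat.forall_natCast_le_iff_le.1 fun k hk => ?_
  obtain ⟨I, hIX, hI, hIk⟩ := Matroid.le_eRk_iff.1 hk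
  have hfin : I.Finite := finite_of_encard_eq_coe hIk
  rw [← hIk, hfin.encard_eq_coe_toFinset_card]
  exact h _ (by simpa using hIX) (by simpa using hI)

end MatroidRank

section AlgebraicMatroid

variable {F E : Type*} [Field F] [Field E] [Algebra F E]

lemma mem_matroid_closure_iff {X : Set E} {x : E} :
    x ∈ (matroid F E).closure X ↔ IsAlgebraic (adjoin F X) x := by
  rw [matroid_closure_eq, SetLike.mem_coe, Subalgebra.mem_algebraicClosure,
    IntermediateField.isAlgebraic_adjoin_iff]

lemma matroid_adjoin_closure (L X : Set E) :
    (matroid (adjoin F L) E).closure X = (matroid F E).closure (L ∪ X) := by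
  ext x
  rw [mem_matroid_closure_iff, mem_matroid_closure_iff, ← IntermediateField.adjoin_adjoin_left]
  rfl

lemma eRk_union_le_eRk_add_eRk_adjoin (L X : Set E) :
    (matroid F E).eRk (L ∪ X) ≤ (matroid F E).eRk L + (matroid (adjoin F L) E).eRk X := by
  obtain ⟨B, hB⟩ := (matroid (adjoin F L) E).exists_isBasis X
  have hclosure : (matroid F E).closure (L ∪ X) = (matroid F E).closure (L ∪ B) := by
    rw [← matroid_adjoin_closure, ← matroid_adjoin_closure, hB.closure_eq_closure]
  calc (matroid F E).eRk (L ∪ X) = (matroid F E).eRk (L ∪ B) := by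
        rw [← Matroid.eRk_closure_eq, hclosure, Matroid.eRk_closure_eq]
    _ ≤ (matroid F E).eRk L + B.encard := (matroid F E).eRk_union_le_eRk_add_encard L B
    _ = (matroid F E).eRk L + (matroid (adjoin F L) E).eRk X := by rw [hB.encard_eq_eRk]

open Pointwise in
lemma mul_subset_matroid_closure (X Y : Set E) : X * Y ⊆ (matroid F E).closure (X ∪ Y) := by
  have hXY : X ∪ Y ⊆ (matroid F E).closure (X ∪ Y) := (matroid F E).subset_closure _
  rw [matroid_closure_eq] at hXY ⊢
  rintro _ ⟨x, hx, y, hy, rfl⟩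
  exact mul_mem (hXY (.inl hx)) (hXY (.inr hy))

lemma addSubgroupClosure_subset_matroid_closure (X : Set E) :
    (AddSubgroup.closure X : Set E) ⊆ (matroid F E).closure X := by
  have hX : X ⊆ (matroid F E).closure X := (matroid F E).subset_closure X
  rw [matroid_closure_eq] at hX ⊢
  exact (AddSubgroup.closure_le
    (Subalgebra.algebraicClosure (Algebra.adjoin F X) E).toSubring.toAddSubgroup).2 hX

lemma linearIndependent_mul_of_algebraicIndependent {ι κ : Type*} {b : ι → E} {s : κ → E}
    (hb : LinearIndependent F b) (hs : AlgebraicIndependent (adjoin F (range b)) s) :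
    LinearIndependent F fun p : ι × κ => b p.1 * s p.2 :=
  have hb' : LinearIndependent F fun i =>
      (⟨b i, IntermediateField.subset_adjoin F _ ⟨i, rfl⟩⟩ : adjoin F (range b)) :=
    .of_comp (adjoin F (range b)).val.toLinearMap hb
  linearIndependent_smul hb' hs.linearIndependent

end AlgebraicMatroid

lemma trdegQ_eq_eRk (X : Set ℂ) : trdegQ X = ((matroid ℚ ℂ).eRk X : Cardinal) := by
  apply le_antisymm
  · refine ciSup_le' fun ⟨t, htX, ht⟩ => ?_
    have hle := Matroid.Indep.encard_le_eRk_of_subset (M := matroid ℚ ℂ) ht htX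
    rw [encard_coe_eq_coe_finsetCard] at hle
    exact_mod_cast hle
  · rw [Cardinal.enat_gc]
    refine eRk_le_of_forall_finset _ fun t htX ht => Cardinal.natCast_le_toENat.2 ?_
    exact le_ciSup (f := fun t : {t : Finset ℂ // (t : Set ℂ) ⊆ X ∧
      AlgebraicIndependent ℚ (Subtype.val : {x : ℂ // x ∈ t} → ℂ)} => (t.1.card : Cardinal.{0}))
      Cardinal.bddAbove_of_small ⟨t, htX, ht⟩

lemma SchanuelConjecture.card_le_eRk (hSC : SchanuelConjecture) {ι : Type*} [Fintype ι]
    {v : ι → ℂ} (hv : LinearIndependent ℚ v) :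
    (Fintype.card ι : ℕ∞) ≤ (matroid ℚ ℂ).eRk (range v ∪ range fun i => exp (v i)) := by
  let e := (Fintype.equivFin ι).symm
  have h := hSC _ _ (hv.comp e e.injective)
  rw [trdegQ_eq_eRk, e.surjective.range_comp,
    show (fun i => exp ((v ∘ e) i)) = (fun i => exp (v i)) ∘ e from rfl,
    e.surjective.range_comp] at h
  exact_mod_cast h

section CoprimePolynomials

open Polynomial in
lemma isCoprime_map_of_isRelPrime {R : Type*} (K : Type*) [CommRing R] [IsDomain R]
    [IsGCDMonoid R] [Field K] [Algebra R K] [IsFractionRing R K] {P Q : R[X]}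
    (hPQ : IsRelPrime P Q) : IsCoprime (P.map (algebraMap R K)) (Q.map (algebraMap R K)) := by
  let _ : NormalizedGCDMonoid R := Classical.choice inferInstance
  refine IsRelPrime.isCoprime fun d hdP hdQ => ?_
  have hd : d ≠ 0 := by
    rintro rfl
    have hzero {A : R[X]} (hA : 0 ∣ A.map (algebraMap R K)) : A = 0 :=
      (Polynomial.map_eq_zero_iff (IsFractionRing.injective R K)).1 (zero_dvd_iff.1 hA)
    exact not_isRelPrime_zero_zero (hzero hdP ▸ hzero hdQ ▸ hPQ)
  let p : R[X] := (IsLocalization.integerNormalization (nonZeroDivisors R) d).primPart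
  have hpd : p.map (algebraMap R K) ∣ d := by
    obtain ⟨c, hc, hcd⟩ := IsLocalization.integerNormalization_spec (nonZeroDivisors R) d
    have hunit : IsUnit (C (algebraMap R K c)) :=
      isUnit_C.2 (IsLocalization.map_units K ⟨c, hc⟩)
    rw [← hunit.dvd_mul_left, ← Polynomial.algebraMap_apply, ← Algebra.smul_def, ← hcd]
    exact Polynomial.map_dvd _ (primPart_dvd _)
  have hdvd {A : R[X]} (hA : d ∣ A.map (algebraMap R K)) : p ∣ A :=
    (isPrimitive_primPart _).dvd_of_fraction_map_dvd_fraction_map (hpd.trans hA)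
  exact isUnit_or_eq_zero_of_isUnit_integerNormalization_primPart hd (hPQ (hdvd hdP) (hdvd hdQ))

lemma not_isRelPrime_of_polynomial_aeval_eq_zero {R E : Type*} [CommRing R] [IsDomain R]
    [IsGCDMonoid R] [Field E] [Algebra R E] [FaithfulSMul R E] {P Q : Polynomial R} {y : E}
    (hP : Polynomial.aeval y P = 0) (hQ : Polynomial.aeval y Q = 0) : ¬ IsRelPrime P Q := by
  intro hPQ
  let _ := FractionRing.liftAlgebra R E
  obtain ⟨U, V, hUV⟩ := isCoprime_map_of_isRelPrime (FractionRing R) hPQ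
  simpa [hP, hQ] using congrArg (Polynomial.aeval y) hUV

variable {K E τ : Type*} [Field K] [Field E] [Algebra K E] {P Q : MvPolynomial τ K} {a : τ → E}

open MvPolynomial in
/-- Singling out the coordinate `j` turns polynomials in all coordinates into univariate
polynomials over the unique factorization domain generated by the others. -/
lemma not_isRelPrime_of_algebraicIndependent_ne (hP : aeval a P = 0) (hQ : aeval a Q = 0) (j : τ)
    (hj : AlgebraicIndependent K fun i : {i // i ≠ j} => a i) : ¬ IsRelPrime P Q := by
  classical
  let R := MvPolynomial {i // i ≠ j} K
  let e : MvPolynomial τ K ≃ₐ[K] Polynomial R :=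
    (renameEquiv K (Equiv.optionSubtypeNe j).symm).trans (optionEquivLeft K _)
  let _ : Algebra R E := (aeval fun i : {i // i ≠ j} => a i).toAlgebra
  have halg (x : R) : algebraMap R E x = aeval (fun i : {i // i ≠ j} => a i) x := rfl
  have : IsScalarTower K R E := .of_algebraMap_eq fun x => by
    rw [halg, algebraMap_eq, aeval_C]
  have : FaithfulSMul R E := (faithfulSMul_iff_algebraMap_injective R E).2 hj
  have heval (A : MvPolynomial τ K) : Polynomial.aeval (a j) (e A) = aeval a A := by
    suffices h : ((Polynomial.aeval (R := R) (a j)).restrictScalars K).comp e.toAlgHom = aeval a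
      from DFunLike.congr_fun h A
    refine algHom_ext fun i => ?_
    rcases eq_or_ne i j with rfl | hij
    · simp [e, R]
    · simp [e, Equiv.optionSubtypeNe_symm_of_ne hij, R, halg]
  intro hPQ
  refine not_isRelPrime_of_polynomial_aeval_eq_zero ((heval P).trans hP) ((heval Q).trans hQ) ?_
  exact .of_map e.symm (by simpa using hPQ)

lemma eRk_range_add_two_le_of_isRelPrime [Fintype τ] (hP : aeval a P = 0) (hQ : aeval a Q = 0)
    (hPQ : IsRelPrime P Q) : (matroid K E).eRk (range a) + 2 ≤ Fintype.card τ := by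
  obtain ⟨I, hI⟩ := ((matroid K E).comap a).exists_isBasis univ
  have hrank : (matroid K E).eRk (range a) = I.encard := by
    rw [hI.encard_eq_eRk, Matroid.eRk_comap, image_univ]
  have hind : AlgebraicIndepOn K a I := by
    obtain ⟨himage, hinj⟩ := Matroid.comap_indep_iff.1 hI.indep
    exact (algebraicIndependent_image hinj).2 himage
  have hcompl : Iᶜ.Nontrivial := by
    by_contra! hsub
    rcases hsub.eq_empty_or_singleton with hempty | ⟨j, hj⟩
    · rw [compl_empty_iff.1 hempty, AlgebraicIndepOn.univ] at hind
      have hzero {A : MvPolynomial τ K} (hA : aeval a A = 0) : A = 0 :=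
        (map_eq_zero_iff _ hind).1 hA
      exact not_isRelPrime_zero_zero (hzero hP ▸ hzero hQ ▸ hPQ)
    · refine not_isRelPrime_of_algebraicIndependent_ne hP hQ j ?_ hPQ
      rw [← compl_compl I, hj] at hind
      exact hind
  calc (matroid K E).eRk (range a) + 2 ≤ I.encard + Iᶜ.encard := by
        rw [hrank]
        gcongr
        exact Order.add_one_le_of_lt (one_lt_encard_iff_nontrivial.2 hcompl)
    _ = Fintype.card τ := by
        rw [encard_add_encard_compl, encard_univ, ENat.card_eq_coe_fintype_card]

end CoprimePolynomials

section ExponentialPolynomials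

lemma isExpPoly_of_fintype {ι : Type*} [Fintype ι] {f : ℂ → ℂ} (lam mu : ι → ℂ)
    (hf : ∀ z, f z = ∑ i, lam i * exp (mu i * z)) : IsExpPoly f := by
  let e := (Fintype.equivFin ι).symm
  refine ⟨Fintype.card ι, lam ∘ e, mu ∘ e, fun z => ?_⟩
  rw [hf z]
  exact (e.sum_comp fun i => lam i * exp (mu i * z)).symm

lemma isExpPoly_exp (α : ℂ) : IsExpPoly fun z => exp (α * z) :=
  isExpPoly_of_fintype (ι := Unit) (fun _ => 1) (fun _ => α) (by simp)

lemma IsExpPoly.mul_s12 {f g : ℂ → ℂ} (hf : IsExpPoly f) (hg : IsExpPoly g) : IsExpPoly (f * g) := by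
  obtain ⟨N, lam, mu, hf⟩ := hf
  obtain ⟨M, l, m, hg⟩ := hg
  refine isExpPoly_of_fintype (fun p : Fin N × Fin M => lam p.1 * l p.2)
    (fun p => mu p.1 + m p.2) fun z => ?_
  rw [Pi.mul_apply, hf, hg, Finset.sum_mul_sum, Fintype.sum_prod_type]
  refine Finset.sum_congr rfl fun i _ => Finset.sum_congr rfl fun j _ => ?_
  rw [add_mul, exp_add]
  ring

lemma EUnit.apply_ne_zero {f : ℂ → ℂ} (hf : EUnit f) (z : ℂ) : f z ≠ 0 := by
  obtain ⟨-, g, -, hfg⟩ := hf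
  exact left_ne_zero_of_mul_eq_one (congrFun hfg z)

/-- Coprimality in the ring `𝓔`: the common divisors of `f` and `g` are units. -/
def ECoprime (f g : ℂ → ℂ) : Prop :=
  ∀ h : ℂ → ℂ, IsExpPoly h → EDvd h f → EDvd h g → EUnit h

lemma EIrreducible.eCoprime {f g : ℂ → ℂ} (hf : EIrreducible f) (hg : EIrreducible g)
    (hfg : ¬ ∃ u : ℂ → ℂ, EUnit u ∧ f = u * g) : ECoprime f g := by
  rintro h hh ⟨p, hp, hfp⟩ ⟨q, hq, hgq⟩
  by_contra hunit
  obtain ⟨-, p', hp', hpp'⟩ := (hf.2.2.2 h p hh hp hfp).resolve_left hunit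
  obtain ⟨-, q', hq', hqq'⟩ := (hg.2.2.2 h q hh hq hgq).resolve_left hunit
  refine hfg ⟨p * q', ⟨hp.mul_s12 hq', p' * q, hp'.mul_s12 hq, ?_⟩, ?_⟩
  · linear_combination q * q' * hpp' + hqq'
  · linear_combination hfp - h * p * hqq' - p * q' * hgq

variable {τ K : Type*} [Field K] [Algebra K ℂ]

/-- The point `(e^{b_j z})_j` on the one-parameter subgroup of the torus with direction `b`:
exponential polynomials with exponents generated by `b` are polynomials in its coordinates. -/
def expPoint (b : τ → ℂ) (z : ℂ) : τ → ℂ := fun j => exp (b j * z)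

lemma aeval_expPoint_monomial (b : τ → ℂ) (z : ℂ) (d : τ →₀ ℕ) (c : K) :
    aeval (expPoint b z) (MvPolynomial.monomial d c) =
      algebraMap K ℂ c * exp (Finsupp.linearCombination ℕ b d * z) := by
  rw [MvPolynomial.aeval_monomial, Finsupp.linearCombination_apply, Finsupp.sum, Finset.sum_mul,
    exp_sum, Finsupp.prod]
  congr! 2 with j
  rw [expPoint, ← exp_nat_mul, nsmul_eq_mul, mul_assoc]

lemma isExpPoly_aeval_expPoint (b : τ → ℂ) (P : MvPolynomial τ K) :
    IsExpPoly fun z => aeval (expPoint b z) P := by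
  refine isExpPoly_of_fintype (fun d : P.support => algebraMap K ℂ (P.coeff d))
    (fun d => Finsupp.linearCombination ℕ b d) fun z => ?_
  conv_lhs => rw [P.as_sum, map_sum, ← Finset.sum_coe_sort]
  simp only [aeval_expPoint_monomial]

lemma exists_linearCombination_nat_eq_add {A ι : Type*} [AddCommGroup A] [Finite ι] [Finite τ]
    (b : τ → A) {mu : ι → A} (hmu : range mu ⊆ AddSubgroup.closure (range b)) :
    ∃ (d : ι → τ →₀ ℕ) (α : A), ∀ i, Finsupp.linearCombination ℕ b (d i) = α + mu i := by
  cases nonempty_fintype τ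
  have hcomb (i : ι) : ∃ c : τ → ℤ, ∑ j, c j • b j = mu i := by
    rw [← Submodule.mem_span_range_iff_exists_fun, ← Submodule.mem_toAddSubgroup,
      Submodule.span_int_eq_addSubgroupClosure]
    exact hmu ⟨i, rfl⟩
  choose c hc using hcomb
  -- Translating by a large multiple of `∑ j, b j` makes all coefficients nonnegative.
  obtain ⟨T, hT⟩ := Finite.exists_le fun p : ι × τ => -c p.1 p.2
  refine ⟨fun i => Finsupp.equivFunOnFinite.symm fun j => (T + c i j).toNat, T • ∑ j, b j,
    fun i => ?_⟩
  rw [Finsupp.linearCombination_apply, Finsupp.sum_fintype _ _ fun j => zero_smul ℕ (b j), ← hc i,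
    Finset.smul_sum, ← Finset.sum_add_distrib]
  refine Finset.sum_congr rfl fun j _ => ?_
  have hnonneg : 0 ≤ T + c i j := by linarith [hT (i, j)]
  rw [← add_smul, Finsupp.equivFunOnFinite_symm_apply_apply, ← natCast_zsmul,
    Int.toNat_of_nonneg hnonneg]

lemma exists_aeval_expPoint_eq {ι : Type*} [Fintype ι] [Finite τ] {b : τ → ℂ} (lam : ι → K)
    {mu : ι → ℂ} (hmu : range mu ⊆ AddSubgroup.closure (range b)) :
    ∃ (P : MvPolynomial τ K) (α : ℂ), ∀ z,
      aeval (expPoint b z) P = exp (α * z) * ∑ i, algebraMap K ℂ (lam i) * exp (mu i * z) := by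
  obtain ⟨d, α, hd⟩ := exists_linearCombination_nat_eq_add b hmu
  refine ⟨∑ i, MvPolynomial.monomial (d i) (lam i), α, fun z => ?_⟩
  simp only [map_sum, aeval_expPoint_monomial, hd, add_mul, exp_add, Finset.mul_sum]
  exact Finset.sum_congr rfl fun i _ => mul_left_comm _ _ _

lemma eDvd_of_aeval_expPoint_eq {b : τ → ℂ} {f : ℂ → ℂ} {α : ℂ} {H P : MvPolynomial τ K}
    (hf : ∀ z, aeval (expPoint b z) (H * P) = exp (α * z) * f z) :
    EDvd (fun z => aeval (expPoint b z) H) f := by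
  refine ⟨_, (isExpPoly_aeval_expPoint b P).mul_s12 (isExpPoly_exp (-α)), funext fun z => ?_⟩
  simp only [Pi.mul_apply]
  rw [← mul_assoc, ← map_mul, hf, mul_right_comm, ← exp_add]
  simp

lemma ECoprime.exists_isRelPrime {b : τ → ℂ} {f g : ℂ → ℂ} {α β : ℂ} {P Q : MvPolynomial τ K}
    (hfg : ECoprime f g) (hP : ∀ z, aeval (expPoint b z) P = exp (α * z) * f z)
    (hQ : ∀ z, aeval (expPoint b z) Q = exp (β * z) * g z) :
    ∃ P' Q' : MvPolynomial τ K, IsRelPrime P' Q' ∧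
      (∀ z, f z = 0 → aeval (expPoint b z) P' = 0) ∧
      ∀ z, g z = 0 → aeval (expPoint b z) Q' = 0 := by
  let _ : GCDMonoid (MvPolynomial τ K) := UniqueFactorizationMonoid.toGCDMonoid _
  obtain ⟨P', Q', hPP', hQQ', hunit⟩ := extract_gcd P Q
  rw [hPP'] at hP
  rw [hQQ'] at hQ
  have hgcd := hfg _ (isExpPoly_aeval_expPoint b (gcd P Q)) (eDvd_of_aeval_expPoint_eq hP)
    (eDvd_of_aeval_expPoint_eq hQ)
  refine ⟨P', Q', (gcd_isUnit_iff_isRelPrime).1 hunit, fun z hz => ?_, fun z hz => ?_⟩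
  · have hprod := hP z
    rw [hz, mul_zero, map_mul] at hprod
    exact (mul_eq_zero.1 hprod).resolve_left (hgcd.apply_ne_zero z)
  · have hprod := hQ z
    rw [hz, mul_zero, map_mul] at hprod
    exact (mul_eq_zero.1 hprod).resolve_left (hgcd.apply_ne_zero z)

lemma ECoprime.eRk_expPoint_add_two_le {ι κ : Type*} [Fintype ι] [Fintype κ] [Fintype τ]
    {f g : ℂ → ℂ} (hfg : ECoprime f g) {lam : ι → K} {mu : ι → ℂ} {l : κ → K} {m : κ → ℂ}
    (hf : ∀ z, f z = ∑ i, algebraMap K ℂ (lam i) * exp (mu i * z))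
    (hg : ∀ z, g z = ∑ i, algebraMap K ℂ (l i) * exp (m i * z)) {b : τ → ℂ}
    (hmu : range mu ⊆ AddSubgroup.closure (range b))
    (hm : range m ⊆ AddSubgroup.closure (range b)) {s : ℂ} (hfs : f s = 0) (hgs : g s = 0) :
    (matroid K ℂ).eRk (range (expPoint b s)) + 2 ≤ Fintype.card τ := by
  obtain ⟨P, α, hP⟩ := exists_aeval_expPoint_eq lam hmu
  obtain ⟨Q, β, hQ⟩ := exists_aeval_expPoint_eq l hm
  simp only [← hf] at hP
  simp only [← hg] at hQ
  obtain ⟨P', Q', hrel, hP', hQ'⟩ := hfg.exists_isRelPrime hP hQ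
  exact eRk_range_add_two_le_of_isRelPrime (hP' s hfs) (hQ' s hgs) hrel

end ExponentialPolynomials

section Schanuel

variable {τ : Type*} {b : τ → ℂ} {L : Set ℂ}

open Pointwise in
lemma eRk_mul_union_biUnion_expPoint_le (b : τ → ℂ) (L : Set ℂ) (s : Finset ℂ) :
    (matroid ℚ ℂ).eRk (range b * s ∪ ⋃ σ ∈ s, range (expPoint b σ)) ≤
      (matroid ℚ ℂ).eRk (range b) + s.card + ((matroid ℚ ℂ).eRk L +
        ∑ σ ∈ s, (matroid (adjoin ℚ L) ℂ).eRk (range (expPoint b σ))) := by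
  refine ((matroid ℚ ℂ).eRk_union_le_eRk_add_eRk _ _).trans (add_le_add ?_ ?_)
  · calc (matroid ℚ ℂ).eRk (range b * s) ≤ (matroid ℚ ℂ).eRk (range b ∪ s) :=
          eRk_le_eRk_of_subset_closure _ (mul_subset_matroid_closure _ _)
      _ ≤ (matroid ℚ ℂ).eRk (range b) + s.card := by
          rw [← encard_coe_eq_coe_finsetCard]
          exact (matroid ℚ ℂ).eRk_union_le_eRk_add_encard _ _
  · calc (matroid ℚ ℂ).eRk (⋃ σ ∈ s, range (expPoint b σ))
        ≤ (matroid ℚ ℂ).eRk (L ∪ ⋃ σ ∈ s, range (expPoint b σ)) :=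
          (matroid ℚ ℂ).eRk_mono subset_union_right
      _ ≤ (matroid ℚ ℂ).eRk L +
          (matroid (adjoin ℚ L) ℂ).eRk (⋃ σ ∈ s, range (expPoint b σ)) :=
          eRk_union_le_eRk_add_eRk_adjoin _ _
      _ ≤ _ := by
          gcongr
          exact eRk_biUnion_le _ _ _

variable [Fintype τ]

open Pointwise in
lemma SchanuelConjecture.card_mul_card_le_eRk (hSC : SchanuelConjecture)
    (hb : LinearIndependent ℚ b) {s : Finset ℂ}
    (hs : AlgebraicIndependent (adjoin ℚ (range b)) ((↑) : s → ℂ)) :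
    (s.card * Fintype.card τ : ℕ∞) ≤
      (matroid ℚ ℂ).eRk (range b * s ∪ ⋃ σ ∈ s, range (expPoint b σ)) := by
  have hcard : (Fintype.card (τ × s) : ℕ∞) = s.card * Fintype.card τ := by
    rw [Fintype.card_prod, Fintype.card_coe, Nat.cast_mul, mul_comm]
  rw [← hcard]
  refine (hSC.card_le_eRk (linearIndependent_mul_of_algebraicIndependent hb hs)).trans
    ((matroid ℚ ℂ).eRk_mono (union_subset_union ?_ ?_))
  · rintro _ ⟨p, rfl⟩
    exact mul_mem_mul (mem_range_self _) p.2.2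
  · rintro _ ⟨p, rfl⟩
    exact mem_biUnion p.2.2 (mem_range_self p.1)

lemma SchanuelConjecture.card_le_of_algebraicIndependent (hSC : SchanuelConjecture)
    (hb : LinearIndependent ℚ b) {s : Finset ℂ}
    (hs : AlgebraicIndependent (adjoin ℚ (range b)) ((↑) : s → ℂ))
    (hexp : ∀ σ ∈ s, (matroid (adjoin ℚ L) ℂ).eRk (range (expPoint b σ)) + 2 ≤ Fintype.card τ) :
    (s.card : ℕ∞) ≤ (matroid ℚ ℂ).eRk L + (matroid ℚ ℂ).eRk (range b) := by
  set r : ℕ∞ := ∑ σ ∈ s, (matroid (adjoin ℚ L) ℂ).eRk (range (expPoint b σ))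
  have hschanuel : (s.card * Fintype.card τ : ℕ∞) ≤
      (matroid ℚ ℂ).eRk (range b) + s.card + ((matroid ℚ ℂ).eRk L + r) :=
    (hSC.card_mul_card_le_eRk hb hs).trans (eRk_mul_union_biUnion_expPoint_le b L s)
  have hsum : r + s.card * 2 ≤ s.card * Fintype.card τ := by
    simpa [Finset.sum_add_distrib, r] using Finset.sum_le_sum hexp
  have hfinite : r + s.card ≠ ⊤ :=
    ne_top_of_le_ne_top (mod_cast ENat.natCast_ne_top (s.card * Fintype.card τ)) <|
      (add_le_add_right (by simp [mul_two]) r).trans hsum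
  refine (ENat.add_le_add_iff_right hfinite).1 ?_
  calc (s.card : ℕ∞) + (r + s.card) = r + s.card * 2 := by ring
    _ ≤ (matroid ℚ ℂ).eRk (range b) + s.card + ((matroid ℚ ℂ).eRk L + r) := hsum.trans hschanuel
    _ = (matroid ℚ ℂ).eRk L + (matroid ℚ ℂ).eRk (range b) + (r + s.card) := by ring

open Pointwise in
lemma SchanuelConjecture.eRk_mul_le (hSC : SchanuelConjecture) (hb : LinearIndependent ℚ b)
    {S : Set ℂ}
    (hexp : ∀ s ∈ S, (matroid (adjoin ℚ L) ℂ).eRk (range (expPoint b s)) + 2 ≤ Fintype.card τ) :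
    (matroid ℚ ℂ).eRk (range b * S) ≤
      (matroid ℚ ℂ).eRk L + 2 * (matroid ℚ ℂ).eRk (range b) := by
  have hS : (matroid (adjoin ℚ (range b)) ℂ).eRk S ≤
      (matroid ℚ ℂ).eRk L + (matroid ℚ ℂ).eRk (range b) :=
    eRk_le_of_forall_finset _ fun t htS ht =>
      hSC.card_le_of_algebraicIndependent hb ht fun σ hσ => hexp σ (htS hσ)
  calc (matroid ℚ ℂ).eRk (range b * S) ≤ (matroid ℚ ℂ).eRk (range b ∪ S) :=
        eRk_le_eRk_of_subset_closure _ (mul_subset_matroid_closure _ _)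
    _ ≤ (matroid ℚ ℂ).eRk (range b) + (matroid (adjoin ℚ (range b)) ℂ).eRk S :=
        eRk_union_le_eRk_add_eRk_adjoin _ _
    _ ≤ (matroid ℚ ℂ).eRk (range b) +
        ((matroid ℚ ℂ).eRk L + (matroid ℚ ℂ).eRk (range b)) := by gcongr
    _ = (matroid ℚ ℂ).eRk L + 2 * (matroid ℚ ℂ).eRk (range b) := by ring

end Schanuel

open Pointwise in
theorem trdeg_BS_le_general (hSC : SchanuelConjecture) {ι κ τ : Type*} [Fintype ι] [Fintype κ]
    [Finite τ] {f g : ℂ → ℂ} {lam mu : ι → ℂ} {l em : κ → ℂ}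
    (hf : ∀ z, f z = ∑ i, lam i * exp (mu i * z)) (hg : ∀ z, g z = ∑ i, l i * exp (em i * z))
    (hfg : ECoprime f g) {S : Set ℂ} (hS : ∀ s ∈ S, f s = 0 ∧ g s = 0) {b : τ → ℂ}
    (hbli : LinearIndependent ℤ b)
    (hbgen : AddSubgroup.closure (range mu ∪ range em) = AddSubgroup.closure (range b)) :
    trdegQ {x | ∃ i, ∃ s ∈ S, x = b i * s} ≤
      trdegQ (range lam ∪ range l) + 2 * trdegQ (range mu ∪ range em) := by
  cases nonempty_fintype τ
  let K := adjoin ℚ (range lam ∪ range l)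
  have hsubset : range mu ∪ range em ⊆ AddSubgroup.closure (range b) :=
    hbgen ▸ AddSubgroup.subset_closure
  have hexp (s : ℂ) (hs : s ∈ S) :
      (matroid K ℂ).eRk (range (expPoint b s)) + 2 ≤ Fintype.card τ :=
    hfg.eRk_expPoint_add_two_le (K := K)
      (lam := fun i => ⟨lam i, IntermediateField.subset_adjoin ℚ _ (.inl ⟨i, rfl⟩)⟩)
      (l := fun i => ⟨l i, IntermediateField.subset_adjoin ℚ _ (.inr ⟨i, rfl⟩)⟩) hf hg
      (subset_union_left.trans hsubset) (subset_union_right.trans hsubset) (hS s hs).1 (hS s hs).2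
  have hrank : (matroid ℚ ℂ).eRk (range b) ≤ (matroid ℚ ℂ).eRk (range mu ∪ range em) :=
    eRk_le_eRk_of_subset_closure _ <|
      (hbgen ▸ AddSubgroup.subset_closure : range b ⊆ _).trans
        (addSubgroupClosure_subset_matroid_closure _)
  have hBS : {x | ∃ i, ∃ s ∈ S, x = b i * s} = range b * S := by
    ext x
    simp only [mem_ofPred_eq, mem_mul, exists_range_iff, eq_comm]
  have hbound : (matroid ℚ ℂ).eRk (range b * S) ≤ (matroid ℚ ℂ).eRk (range lam ∪ range l) +
      2 * (matroid ℚ ℂ).eRk (range mu ∪ range em) :=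
    (hSC.eRk_mul_le ((LinearIndependent.iff_fractionRing ℤ ℚ).1 hbli) hexp).trans (by gcongr)
  rw [hBS, trdegQ_eq_eRk, trdegQ_eq_eRk, trdegQ_eq_eRk]
  simpa using Cardinal.ofENat_le_ofENat.2 hbound

/-- Assuming Schanuel's Conjecture: the transcendence degree of `{bᵢ·s : i ≤ D, s ∈ S}`
over `ℚ` is at most `δ₁ + 2δ₂`. -/
theorem trdeg_BS_le (hSC : SchanuelConjecture)
    (f g : ℂ → ℂ) (N M : ℕ) (lam mu : Fin N → ℂ) (l em : Fin M → ℂ)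
    (hfrep : IsCanonicalRep f lam mu) (hgrep : IsCanonicalRep g l em)
    (hfirr : EIrreducible f) (hgirr : EIrreducible g)
    (hdist : ¬ ∃ u : ℂ → ℂ, EUnit u ∧ f = u * g)
    (S : Set ℂ) (hSinf : S.Infinite)
    (hS : ∀ s ∈ S, s ≠ 0 ∧ f s = 0 ∧ g s = 0)
    (D : ℕ) (b : Fin D → ℂ)
    (hD : Module.finrank ℚ (Submodule.span ℚ (Set.range mu ∪ Set.range em)) = D)
    (hbli : LinearIndependent ℤ b)
    (hbgen : AddSubgroup.closure (Set.range mu ∪ Set.range em) =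
      AddSubgroup.closure (Set.range b))
    (δ₁ δ₂ : ℕ)
    (hδ₁ : trdegQ (Set.range lam ∪ Set.range l) = (δ₁ : Cardinal))
    (hδ₂ : trdegQ (Set.range mu ∪ Set.range em) = (δ₂ : Cardinal))
 :
    trdegQ {x : ℂ | ∃ i : Fin D, ∃ s ∈ S, x = b i * s} ≤ ((δ₁ + 2 * δ₂ : ℕ) : Cardinal) := by
  have h := trdeg_BS_le_general hSC hfrep.2.2 hgrep.2.2 (hfirr.eCoprime hgirr hdist)
    (fun s hs => (hS s hs).2) hbli hbgen
  rw [hδ₁, hδ₂] at h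
  exact_mod_cast h
end
end

section
/- Let f(z) = λ₁e^{μ₁z} + ⋯ + λ_N e^{μ_N z} be the canonical representation of an exponential polynomial in 𝓔 that is not simple (i.e. dim_ℚ supp(f) ≥ 2). If s₁ and s₂ are two distinct zeros of f in ℂ, then the N-tuples (e^{μ₁s₁},…,e^{μ_N s₁}) and (e^{μ₁s₂},…,e^{μ_N s₂}) are different. -/
open Complex Set

noncomputable section

theorem exp_mul_eq_exp_mul_iff_mem_zmultiples {μ s₁ s₂ : ℂ} (hne : s₁ ≠ s₂) :
    exp (μ * s₁) = exp (μ * s₂) ↔ μ ∈ AddSubgroup.zmultiples (2 * Real.pi * I / (s₁ - s₂)) := by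
  have hsub : s₁ - s₂ ≠ 0 := sub_ne_zero.mpr hne
  rw [exp_eq_exp_iff_exists_int, AddSubgroup.mem_zmultiples_iff]
  refine exists_congr fun n => ?_
  rw [zsmul_eq_mul, ← mul_div_assoc, div_eq_iff hsub, mul_sub, eq_sub_iff_add_eq', eq_comm]

theorem rank_span_range_le_one_of_exp_mul_eq {ι : Type*} {mu : ι → ℂ} {s₁ s₂ : ℂ}
    (hne : s₁ ≠ s₂) (hexp : ∀ i, exp (mu i * s₁) = exp (mu i * s₂)) :
    Module.rank ℚ (Submodule.span ℚ (range mu)) ≤ 1 := by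
  refine (rank_submodule_le_one_iff' _).mpr
    ⟨2 * Real.pi * I / (s₁ - s₂), Submodule.span_le.mpr ?_⟩
  rintro _ ⟨i, rfl⟩
  obtain ⟨n, hn⟩ := (exp_mul_eq_exp_mul_iff_mem_zmultiples hne).mp (hexp i)
  exact Submodule.mem_span_singleton.mpr ⟨n, by rw [← hn, Int.cast_smul_eq_zsmul]⟩

theorem exp_tuples_ne_of_zeros_general {ι : Type*} {mu : ι → ℂ}
    (hrank : 1 < Module.rank ℚ (Submodule.span ℚ (range mu))) :
    Function.Injective fun (s : ℂ) (i : ι) => exp (mu i * s) := by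
  intro s₁ s₂ hexp
  by_contra hne
  exact hrank.not_ge (rank_span_range_le_one_of_exp_mul_eq hne (congrFun hexp))

/-- If `f` is not simple and `s₁ ≠ s₂` are zeros of `f`, then the tuples
`(e^{μ₁s₁},…,e^{μ_N s₁})` and `(e^{μ₁s₂},…,e^{μ_N s₂})` are different. -/
theorem exp_tuples_ne_of_zeros (f : ℂ → ℂ) (N : ℕ) (lam mu : Fin N → ℂ)
    (hrep : IsCanonicalRep f lam mu)
    (hns : 2 ≤ Module.finrank ℚ (Submodule.span ℚ (Set.range mu)))
    (s₁ s₂ : ℂ) (hs₁ : f s₁ = 0) (hs₂ : f s₂ = 0) (hne : s₁ ≠ s₂) :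
    (fun i : Fin N => Complex.exp (mu i * s₁)) ≠
      (fun i : Fin N => Complex.exp (mu i * s₂)) := by
  exact (exp_tuples_ne_of_zeros_general
    (by exact_mod_cast Module.lt_rank_of_lt_finrank hns)).ne hne
end
end
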